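/- arXiv:2209.14880 — 2 statements merged into one kernel-verified Lean document; each statement's English description precedes it below -/
import Mathlib

section
/- Let ε ∈ (0, π/6) and let G = (V,E) be an ε-regular graph such that every straight path of G is open. Then F_bond(G) = Σ_{x ∈ V} (4 − #N(x,E)) = 2·#S(G), where #S(G) is the number of strata counted with multiplicity. -/
open scoped Real

noncomputable section

abbrev Pt : Type := EuclideanSpace ℝ (Fin 2)

/-- The clockwise angle in `[0, 2π)` between the vectors `u` and `v`. -/
noncomputable def cwAngle (u v : Pt) : ℝ :=
  let a := Complex.arg ((⟨u 0, u 1⟩ : ℂ) * (starRingEnd ℂ) (⟨v 0, v 1⟩ : ℂ))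
  if a < 0 then a + 2 * π else a

/-- A graph with finitely many vertices in the plane and unordered pairs of distinct
vertices as edges. -/
structure BondGraph where
  V : Set Pt
  finV : V.Finite
  E : Set (Sym2 Pt)
  not_diag : ∀ e ∈ E, ¬ e.IsDiag
  mem_V : ∀ e ∈ E, ∀ x ∈ e, x ∈ V

/-- The neighborhood `N(x, E)`. -/
def nbhd (G : BondGraph) (x : Pt) : Set Pt := {y | s(x, y) ∈ G.E}

/-- The degree `#N(x, E)`. -/
noncomputable def deg (G : BondGraph) (x : Pt) : ℕ := (nbhd G x).ncard

/-- The bond energy `F_bond(G) = Σ_{x ∈ V} (4 − #N(x,E))`. -/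
noncomputable def Fbond (G : BondGraph) : ℤ := ∑ᶠ x ∈ G.V, ((4 : ℤ) - (deg G x : ℤ))

def goodAngles (ε : ℝ) : Set ℝ :=
  Set.Icc (π / 2 - ε) (π / 2 + ε) ∪ Set.Icc (π - ε) (π + ε) ∪
    Set.Icc (3 * π / 2 - ε) (3 * π / 2 + ε)

/-- `ε`-regularity of a graph. -/
def EpsRegular (ε : ℝ) (G : BondGraph) : Prop :=
  (∀ x y : Pt, s(x, y) ∈ G.E → 1 - ε ≤ dist x y) ∧
  (∀ x y z : Pt, s(x, y) ∈ G.E → s(z, y) ∈ G.E → x ≠ z →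
    cwAngle (x - y) (z - y) ∈ goodAngles ε)

/-- The `i`-th vertex of a path (with junk value `0` out of range). -/
def nth (γ : List Pt) (i : ℕ) : Pt := γ.getD i 0

/-- The interior angle `θ_{i+2} = θ_{x_{i+2}, x_{i+1}, x_i}` of a path (`0`-based). -/
noncomputable def pathAngle (γ : List Pt) (i : ℕ) : ℝ :=
  cwAngle (nth γ (i + 2) - nth γ (i + 1)) (nth γ i - nth γ (i + 1))

/-- The list of (unordered) edges of a path. -/
def pathEdges (γ : List Pt) : List (Sym2 Pt) := (γ.zip γ.tail).map (fun p => s(p.1, p.2))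

/-- A straight path of the graph `G`. -/
def IsStraightPath (ε : ℝ) (G : BondGraph) (γ : List Pt) : Prop :=
  2 ≤ γ.length ∧
  (∀ x ∈ γ, x ∈ G.V) ∧
  γ.Chain' (fun a b => s(a, b) ∈ G.E) ∧
  (∀ i : ℕ, i + 2 < γ.length → pathAngle γ i ∈ Set.Icc (π - ε) (π + ε)) ∧
  (pathEdges γ).Nodup

/-- A path is closed if its first and last points coincide. -/
def IsClosedPath (γ : List Pt) : Prop := γ.head? = γ.getLast?

/-- The angle excess `θ_ex(γ)` of a path. -/
noncomputable def thetaEx (γ : List Pt) : ℝ :=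
  ∑ i ∈ Finset.range (γ.length - 2), |pathAngle γ i - π|

/-- Two lists are identified if they agree up to reversal. -/
def revSetoid : Setoid (List Pt) where
  r a b := a = b ∨ a = b.reverse
  iseqv := by
    constructor
    · intro a; exact Or.inl rfl
    · intro a b h
      rcases h with h | h
      · exact Or.inl h.symm
      · right; rw [h, List.reverse_reverse]
    · intro a b c hab hbc
      rcases hab with h | h <;> rcases hbc with h' | h' <;>
        simp [h, h', List.reverse_reverse]

/-- An (undirected) stratum: a list of points up to reversal. -/
def Stratum : Type := Quotient revSetoid

/-- The length `l(s)` of a stratum. -/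
def Stratum.len : Stratum → ℕ :=
  Quotient.lift List.length (by rintro a b (rfl | rfl) <;> simp)

/-- The set of vertices of a stratum. -/
def Stratum.verts : Stratum → Set Pt :=
  Quotient.lift (fun l => {x : Pt | x ∈ l}) (by
    rintro a b (rfl | rfl)
    · rfl
    · ext x; simp)

/-- `γ` is a subpath of `γ'`, up to reversal. -/
def SubPathUpToRev (γ γ' : List Pt) : Prop := γ <:+: γ' ∨ γ <:+: γ'.reverse

/-- A maximal straight path (maximal with respect to inclusion). -/
def IsMaximalStraight (ε : ℝ) (G : BondGraph) (γ : List Pt) : Prop :=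
  IsStraightPath ε G γ ∧
    ∀ γ' : List Pt, IsStraightPath ε G γ' → SubPathUpToRev γ γ' →
      (γ' = γ ∨ γ' = γ.reverse)

/-- `x ∈ V₂^π`: a vertex of degree two whose bond angle lies in `[π−ε, π+ε]`. -/
def V2pi (ε : ℝ) (G : BondGraph) (x : Pt) : Prop :=
  x ∈ G.V ∧ ∃ x₁ x₂ : Pt, x₁ ≠ x₂ ∧ nbhd G x = {x₁, x₂} ∧
    cwAngle (x₁ - x) (x₂ - x) ∈ Set.Icc (π - ε) (π + ε)

/-- The set of strata `S(G)`: maximal straight paths, together with the degenerate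
one-point stratum `(x)` counted twice for `x ∈ V₀` and once for `x ∈ V₁ ∪ V₂^π`
(the `Fin 2` tag realizes the multiplicity). -/
def strataSet (ε : ℝ) (G : BondGraph) : Set (Stratum × Fin 2) :=
  {p | ∃ γ : List Pt, IsMaximalStraight ε G γ ∧ p = (Quotient.mk revSetoid γ, 0)}
  ∪ {p | ∃ x ∈ G.V, deg G x = 0 ∧
      (p = (Quotient.mk revSetoid [x], 0) ∨ p = (Quotient.mk revSetoid [x], 1))}
  ∪ {p | ∃ x ∈ G.V, (deg G x = 1 ∨ V2pi ε G x) ∧ p = (Quotient.mk revSetoid [x], 0)}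

/-- The set of orthogonal strata `S^⊥(s)`. -/
def orthStrata (ε : ℝ) (G : BondGraph) (s : Stratum × Fin 2) : Set (Stratum × Fin 2) :=
  {s' | s' ∈ strataSet ε G ∧ s' ≠ s ∧ (Stratum.verts s.1 ∩ Stratum.verts s'.1).Nonempty}

/-! As `3 * ε` is less than a right angle, the bonds at a vertex `x` can be labelled injectively by
the four directions in `ZMod 4`, in such a way that straight angles correspond to opposite labels.
Going straight on at `x` thus matches the bonds at `x` in pairs, and counting the directions axis
by axis shows that `4 - #N(x)` is the number of unmatched bonds at `x` plus twice the multiplicity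
of the stratum `(x)`. Summing over `x`, it remains to see that unmatched bond ends are twice as
many as maximal straight paths. As no straight path is closed, an unmatched bond extends uniquely
to a maximal straight path that starts with it, and each maximal straight path arises exactly
twice, once for each of its two orientations.
-/

section Labelling

variable {α A H : Type*} [SeminormedAddCommGroup A] [AddCommGroup H]

lemma exists_label_of_close (q : H →+ A) {δ : ℝ} (hq : ∀ h ≠ 0, 3 * δ ≤ ‖q h‖) (φ : α → A)
    {N : Set α} (hN : ∀ y ∈ N, ∀ z ∈ N, ∃ h, ‖φ y - φ z - q h‖ < δ) :
    ∃ κ : α → H, ∀ y ∈ N, ∀ z ∈ N, ∀ h, ‖φ y - φ z - q h‖ < δ → κ y = κ z + h := by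
  rcases N.eq_empty_or_nonempty with rfl | ⟨o, ho⟩
  · exact ⟨fun _ => 0, by simp⟩
  choose! κ hκ using fun y (hy : y ∈ N) => hN y hy o ho
  refine ⟨κ, fun y hy z hz h hh => ?_⟩
  by_contra hne
  have hlower : 3 * δ ≤ ‖q (κ y - (κ z + h))‖ := hq _ (sub_ne_zero.2 hne)
  have hsplit : q (κ y - (κ z + h)) =
      (φ y - φ z - q h) + (φ z - φ o - q (κ z)) - (φ y - φ o - q (κ y)) := by
    rw [map_sub, map_add]
    abel
  have hupper : ‖q (κ y - (κ z + h))‖ ≤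
      ‖φ y - φ z - q h‖ + ‖φ z - φ o - q (κ z)‖ + ‖φ y - φ o - q (κ y)‖ := by
    rw [hsplit]
    exact norm_sub_le_of_le (norm_add_le _ _) le_rfl
  linarith [hκ y hy, hκ z hz]

end Labelling

section Angles
lemma norm_coe_angle_le (θ : ℝ) : ‖(θ : Real.Angle)‖ ≤ |θ| :=
  QuotientAddGroup.norm_mk_le_norm

/-- The embedding of `ZMod 4` into the circle as the multiples of the right angle. -/
def quarterTurn : ZMod 4 →+ Real.Angle :=
  ZMod.lift 4 ⟨zmultiplesHom Real.Angle ((π / 2 : ℝ) : Real.Angle), by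
    rw [zmultiplesHom_apply, ← Real.Angle.coe_zsmul, zsmul_eq_mul,
      show ((4 : ℕ) : ℤ) * (π / 2) = 2 * π by push_cast; ring, Real.Angle.coe_two_pi]⟩

lemma quarterTurn_natCast (n : ℕ) : quarterTurn n = ((n * (π / 2) : ℝ) : Real.Angle) := by
  rw [quarterTurn, ← Int.cast_natCast n, ZMod.lift_coe, zmultiplesHom_apply, natCast_zsmul,
    ← Real.Angle.coe_nsmul, nsmul_eq_mul]

lemma norm_quarterTurn_natCast (n : ℕ) :
    ‖quarterTurn n‖ = π / 2 * (min (n % 4) (4 - n % 4) : ℕ) := by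
  have : Fact (0 < 2 * π) := ⟨Real.two_pi_pos⟩
  have h := AddCircle.norm_div_natCast (p := 2 * π) (m := n) (n := 4)
  rw [show (n : ℝ) / (4 : ℕ) * (2 * π) = n * (π / 2) by push_cast; ring] at h
  rw [quarterTurn_natCast]
  refine h.trans ?_
  push_cast
  ring

lemma pi_div_two_le_norm_quarterTurn {m : ZMod 4} (hm : m ≠ 0) : π / 2 ≤ ‖quarterTurn m‖ := by
  obtain ⟨n, rfl⟩ := ZMod.natCast_zmod_surjective m
  have hmod : n % 4 ≠ 0 := fun h => hm ((ZMod.natCast_eq_zero_iff n 4).2 (Nat.dvd_of_mod_eq_zero h))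
  rw [norm_quarterTurn_natCast]
  refine le_mul_of_one_le_right Real.pi_div_two_pos.le ?_
  exact_mod_cast (by omega : 1 ≤ min (n % 4) (4 - n % 4))

lemma norm_sub_quarterTurn_le {ε θ : ℝ} {n : ℕ}
    (h : θ ∈ Set.Icc (n * (π / 2) - ε) (n * (π / 2) + ε)) :
    ‖(θ : Real.Angle) - quarterTurn n‖ ≤ ε := by
  rw [quarterTurn_natCast, ← Real.Angle.coe_sub]
  refine (norm_coe_angle_le _).trans (abs_le.2 ⟨?_, ?_⟩) <;> linarith [h.1, h.2]

lemma norm_sub_quarterTurn_two_le {ε θ : ℝ} (h : θ ∈ Set.Icc (π - ε) (π + ε)) :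
    ‖(θ : Real.Angle) - quarterTurn 2‖ ≤ ε := by
  refine norm_sub_quarterTurn_le (n := 2) ?_
  convert h using 2 <;> push_cast <;> ring

lemma exists_quarterTurn_of_mem_goodAngles {ε θ : ℝ} (h : θ ∈ goodAngles ε) :
    ∃ j : ZMod 4, j ≠ 0 ∧ ‖(θ : Real.Angle) - quarterTurn j‖ ≤ ε ∧
      (j = 2 → θ ∈ Set.Icc (π - ε) (π + ε)) := by
  rcases h with (h | h) | h
  · refine ⟨(1 : ℕ), by decide, norm_sub_quarterTurn_le ?_, fun hj => absurd hj (by decide)⟩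
    simpa using h
  · exact ⟨2, by decide, norm_sub_quarterTurn_two_le h, fun _ => h⟩
  · refine ⟨(3 : ℕ), by decide, norm_sub_quarterTurn_le ?_, fun hj => absurd hj (by decide)⟩
    convert h using 2 <;> push_cast <;> ring

/-- The direction of a plane vector, as an angle modulo `2π`. -/
def direction (u : Pt) : Real.Angle := Complex.arg ⟨u 0, u 1⟩

lemma coe_cwAngle {u v : Pt} (hu : u ≠ 0) (hv : v ≠ 0) :
    (cwAngle u v : Real.Angle) = direction u - direction v := by
  have toComplex_ne_zero (w : Pt) (hw : w ≠ 0) : (⟨w 0, w 1⟩ : ℂ) ≠ 0 := by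
    contrapose! hw
    ext i
    fin_cases i
    · exact congrArg Complex.re hw
    · exact congrArg Complex.im hw
  have harg : (Complex.arg ((⟨u 0, u 1⟩ : ℂ) * starRingEnd ℂ ⟨v 0, v 1⟩) : Real.Angle) =
      direction u - direction v := by
    rw [Complex.arg_mul_coe_angle (toComplex_ne_zero u hu)
      ((map_ne_zero _).2 (toComplex_ne_zero v hv)), Complex.arg_conj_coe_angle, ← sub_eq_add_neg]
    rfl
  simp only [cwAngle]
  split_ifs
  · rw [Real.Angle.coe_add, Real.Angle.coe_two_pi, add_zero, harg]
  · exact harg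

end Angles

section Directions

variable {ε : ℝ} {G : BondGraph}

/-- Condition (ii) of `ε`-regularity, on the bond angles alone. -/
def HasRegularAngles (ε : ℝ) (G : BondGraph) : Prop :=
  ∀ x y z : Pt, s(x, y) ∈ G.E → s(z, y) ∈ G.E → x ≠ z → cwAngle (x - y) (z - y) ∈ goodAngles ε

lemma BondGraph.ne_of_bond {x y : Pt} (h : s(x, y) ∈ G.E) : x ≠ y :=
  fun hxy => G.not_diag _ h (Sym2.mk_isDiag_iff.2 hxy)

/- Bond angles are only known up to `ε`; a relation between three bonds at `x` accumulates an error
of at most `3 * ε`, which is less than the right angle separating two labels. -/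
lemma exists_direction_label (hε : ε < π / 6) (hang : HasRegularAngles ε G) (x : Pt) :
    ∃ κ : Pt → ZMod 4, Set.InjOn κ (nbhd G x) ∧ ∀ y ∈ nbhd G x, ∀ z ∈ nbhd G x,
      (cwAngle (y - x) (z - x) ∈ Set.Icc (π - ε) (π + ε) ↔ κ y = κ z + 2) := by
  have hgood : ∀ y ∈ nbhd G x, ∀ z ∈ nbhd G x, y ≠ z →
      cwAngle (y - x) (z - x) ∈ goodAngles ε := fun y hy z hz =>
    hang y x z (Sym2.eq_swap ▸ hy) (Sym2.eq_swap ▸ hz)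
  have hcoe : ∀ y ∈ nbhd G x, ∀ z ∈ nbhd G x, (cwAngle (y - x) (z - x) : Real.Angle) =
      direction (y - x) - direction (z - x) := fun y hy z hz =>
    coe_cwAngle (sub_ne_zero.2 (BondGraph.ne_of_bond hy).symm)
      (sub_ne_zero.2 (BondGraph.ne_of_bond hz).symm)
  obtain ⟨κ, hκ⟩ := exists_label_of_close quarterTurn (δ := π / 6)
    (fun m hm => by linarith [pi_div_two_le_norm_quarterTurn hm]) (fun y => direction (y - x))
    (N := nbhd G x) fun y hy z hz => by
      rcases eq_or_ne y z with rfl | hyz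
      · exact ⟨0, by simpa using Real.pi_pos⟩
      · obtain ⟨j, -, hj, -⟩ := exists_quarterTurn_of_mem_goodAngles (hgood y hy z hz hyz)
        exact ⟨j, (hcoe y hy z hz ▸ hj).trans_lt hε⟩
  have hturn : ∀ y ∈ nbhd G x, ∀ z ∈ nbhd G x, y ≠ z →
      ∃ j ≠ 0, κ y = κ z + j ∧ (j = 2 → cwAngle (y - x) (z - x) ∈ Set.Icc (π - ε) (π + ε)) := by
    intro y hy z hz hyz
    obtain ⟨j, hj0, hj, hj2⟩ := exists_quarterTurn_of_mem_goodAngles (hgood y hy z hz hyz)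
    exact ⟨j, hj0, hκ y hy z hz j ((hcoe y hy z hz ▸ hj).trans_lt hε), hj2⟩
  refine ⟨κ, fun y hy z hz hyz => ?_, fun y hy z hz => ⟨fun h => ?_, fun h => ?_⟩⟩
  · by_contra hne
    obtain ⟨j, hj0, hj, -⟩ := hturn y hy z hz hne
    exact hj0 (left_eq_add.1 (hyz.symm.trans hj))
  · exact hκ y hy z hz 2 ((hcoe y hy z hz ▸ norm_sub_quarterTurn_two_le h).trans_lt hε)
  · have hyz : y ≠ z := by
      rintro rfl
      exact absurd (left_eq_add.1 h) (by decide)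
    obtain ⟨j, -, hj, hj2⟩ := hturn y hy z hz hyz
    exact hj2 (add_left_cancel (hj.symm.trans h))

end Directions

section TransitionSystems

variable {α : Type*} {A : SimpleGraph α}

/-- A partial transition system on a graph: at each vertex `b`, some of the incident edges are
matched in pairs, and `Passes a b c` says that the edges `ab` and `bc` are matched at `b`. -/
structure TransitionSystem (A : SimpleGraph α) where
  Passes : α → α → α → Prop
  adj_left : ∀ {a b c}, Passes a b c → A.Adj a b
  symm : ∀ {a b c}, Passes a b c → Passes c b a
  right_unique : ∀ {a b c d}, Passes a b c → Passes a b d → c = d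
  irrefl : ∀ {a b}, ¬ Passes a b a

namespace TransitionSystem

variable (T : TransitionSystem A)

/-- A walk of the graph, given by its list of vertices, that leaves each of its inner vertices
through the edge matched with the one it came from. -/
structure IsWalk (γ : List α) : Prop where
  isChain : γ.IsChain A.Adj
  passes : ∀ {a b c}, [a, b, c] <:+: γ → T.Passes a b c

/-- A walk with at least one edge that is not part of a longer one. -/
def IsMaximalWalk (γ : List α) : Prop :=
  2 ≤ γ.length ∧ T.IsWalk γ ∧ ∀ γ', T.IsWalk γ' → γ <:+: γ' → γ' = γ

/-- The oriented edges, as pairs of vertices, that are unmatched at their first vertex. -/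
def terminalDarts : Set (α × α) :=
  {d | A.Adj d.1 d.2 ∧ ∀ z, ¬ T.Passes z d.1 d.2}

/-- The walks of an acyclic transition system never return to a vertex, not even by crossing
themselves. -/
def IsAcyclic : Prop := ∀ γ, T.IsWalk γ → γ.Nodup

variable {T} {γ γ' : List α} {a b c : α} {l m : List α}

lemma IsWalk.infix (h : T.IsWalk γ') (hγ : γ <:+: γ') : T.IsWalk γ :=
  ⟨h.isChain.infix hγ, fun habc => h.passes (habc.trans hγ)⟩

lemma IsWalk.reverse (h : T.IsWalk γ) : T.IsWalk γ.reverse :=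
  ⟨List.isChain_reverse.2 (h.isChain.imp fun _ _ => A.adj_symm),
    fun habc => T.symm (h.passes (List.reverse_infix.1 (by simpa using habc)))⟩

lemma IsWalk.cons (h : T.IsWalk (b :: c :: l)) (hpass : T.Passes a b c) :
    T.IsWalk (a :: b :: c :: l) := by
  refine ⟨List.isChain_cons_cons.2 ⟨T.adj_left hpass, h.isChain⟩, fun hxyz => ?_⟩
  rcases List.infix_cons_iff.1 hxyz with hxyz | hxyz
  · simp only [List.cons_prefix_cons] at hxyz
    obtain ⟨rfl, rfl, rfl, -⟩ := hxyz
    exact hpass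
  · exact h.passes hxyz

lemma isWalk_pair (h : A.Adj a b) : T.IsWalk [a, b] :=
  ⟨List.isChain_pair.2 h, fun habc => absurd habc.length_le (by simp)⟩

lemma IsWalk.mem_support (h : T.IsWalk γ) (hlen : 2 ≤ γ.length) (ha : a ∈ γ) :
    a ∈ A.support := by
  obtain ⟨l, m, rfl⟩ := List.append_of_mem ha
  rcases m with _ | ⟨b, m⟩
  · rcases l.eq_nil_or_concat with rfl | ⟨l, b, rfl⟩
    · simp at hlen
    · have hab := h.isChain.infix (l₁ := [b, a]) ⟨l, [], by simp⟩
      exact ⟨b, (List.isChain_pair.1 hab).symm⟩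
  · have hab := h.isChain.infix (l₁ := [a, b]) ⟨l, m, by simp⟩
    exact ⟨b, List.isChain_pair.1 hab⟩

lemma IsWalk.isPrefix_or_isPrefix (hl : T.IsWalk (a :: b :: l)) (hm : T.IsWalk (a :: b :: m)) :
    a :: b :: l <+: a :: b :: m ∨ a :: b :: m <+: a :: b :: l := by
  induction l generalizing a b m with
  | nil => exact Or.inl (by simp)
  | cons c l ih =>
    rcases m with _ | ⟨d, m⟩
    · exact Or.inr (by simp)
    · obtain rfl : c = d := T.right_unique (hl.passes ⟨[], l, rfl⟩) (hm.passes ⟨[], m, rfl⟩)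
      simpa only [List.prefix_cons_inj] using
        ih (hl.infix (List.infix_cons List.infix_rfl)) (hm.infix (List.infix_cons List.infix_rfl))

lemma isAcyclic_of_forall_cycle
    (h : ∀ a l, 2 ≤ l.length → (l ++ [a]).Nodup → ¬ T.IsWalk (a :: (l ++ [a]))) :
    T.IsAcyclic := by
  intro γ hγ
  induction γ with
  | nil => exact List.nodup_nil
  | cons a γ ih =>
    have hnodup := ih (hγ.infix (List.infix_cons List.infix_rfl))
    refine List.nodup_cons.2 ⟨fun ha => ?_, hnodup⟩
    obtain ⟨l, m, rfl⟩ := List.append_of_mem ha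
    have hcycle : T.IsWalk (a :: (l ++ [a])) := hγ.infix ⟨[], m, by simp⟩
    rcases l with _ | ⟨b, _ | ⟨c, l⟩⟩
    · exact A.irrefl (List.isChain_pair.1 hcycle.isChain)
    · exact T.irrefl (hcycle.passes (List.infix_refl [a, b, a]))
    · exact h a (b :: c :: l) (by simp) (hnodup.sublist (by simp)) hcycle

lemma IsWalk.length_le (hT : T.IsAcyclic) (hfin : A.support.Finite) (h : T.IsWalk γ)
    (hlen : 2 ≤ γ.length) : γ.length ≤ A.support.ncard := by
  classical
  rw [← List.toFinset_card_of_nodup (hT γ h), ← Set.ncard_coe_finset]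
  exact Set.ncard_le_ncard (fun a ha => h.mem_support hlen (List.mem_toFinset.1 ha)) hfin

lemma IsMaximalWalk.reverse (h : T.IsMaximalWalk γ) : T.IsMaximalWalk γ.reverse := by
  obtain ⟨hlen, hwalk, hmax⟩ := h
  refine ⟨by simpa using hlen, hwalk.reverse, fun γ' hγ' hsub => ?_⟩
  rw [← hmax γ'.reverse hγ'.reverse (List.reverse_infix.1 (by simpa using hsub)),
    List.reverse_reverse]

lemma IsMaximalWalk.exists_eq_cons_cons (h : T.IsMaximalWalk γ) :
    ∃ a b l, γ = a :: b :: l ∧ (a, b) ∈ T.terminalDarts := by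
  obtain ⟨hlen, hwalk, hmax⟩ := h
  obtain ⟨a, b, l, rfl⟩ : ∃ a b l, γ = a :: b :: l := by
    rcases γ with _ | ⟨a, _ | ⟨b, l⟩⟩
    · simp at hlen
    · simp at hlen
    · exact ⟨a, b, l, rfl⟩
  refine ⟨a, b, l, rfl, (List.isChain_cons_cons.1 hwalk.isChain).1, fun z hz => ?_⟩
  simpa using congrArg List.length
    (hmax _ (hwalk.cons hz) (List.infix_cons List.infix_rfl))

lemma IsMaximalWalk.eq_of_cons_cons (hl : T.IsMaximalWalk (a :: b :: l))
    (hm : T.IsMaximalWalk (a :: b :: m)) : a :: b :: l = a :: b :: m := by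
  rcases hl.2.1.isPrefix_or_isPrefix hm.2.1 with hpre | hpre
  · exact (hl.2.2 _ hm.2.1 hpre.isInfix).symm
  · exact hm.2.2 _ hl.2.1 hpre.isInfix

lemma exists_isMaximalWalk_cons_cons (hT : T.IsAcyclic) (hfin : A.support.Finite)
    (hab : (a, b) ∈ T.terminalDarts) : ∃ l, T.IsMaximalWalk (a :: b :: l) := by
  have hlengths : (List.length '' {l | T.IsWalk (a :: b :: l)}).Finite := by
    refine (Set.finite_Iic A.support.ncard).subset ?_
    rintro _ ⟨l, hl, rfl⟩
    have := IsWalk.length_le hT hfin hl (by simp)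
    simp only [List.length_cons] at this
    exact Set.mem_Iic.2 (by omega)
  obtain ⟨l, hl, hmax⟩ := Set.Finite.exists_maximalFor' List.length _ hlengths
    ⟨[], isWalk_pair hab.1⟩
  refine ⟨l, by simp, hl, ?_⟩
  rintro _ hγ ⟨p, q, rfl⟩
  have hq : (l ++ q).length ≤ l.length :=
    hmax (show T.IsWalk (a :: b :: (l ++ q)) from hγ.infix ⟨p, [], by simp⟩) (by simp)
  obtain rfl : q = [] := by simpa using hq
  rcases p.eq_nil_or_concat with rfl | ⟨p, z, rfl⟩
  · simp
  · exact absurd (hγ.passes ⟨p, l, by simp⟩) (hab.2 z)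

lemma bijOn_take_two_isMaximalWalk (hT : T.IsAcyclic) (hfin : A.support.Finite) :
    Set.BijOn (List.take 2) {γ | T.IsMaximalWalk γ}
      ((fun d : α × α => [d.1, d.2]) '' T.terminalDarts) := by
  refine ⟨fun γ hγ => ?_, fun γ hγ γ' hγ' heq => ?_, ?_⟩
  · obtain ⟨a, b, l, rfl, hab⟩ := hγ.exists_eq_cons_cons
    exact ⟨(a, b), hab, rfl⟩
  · obtain ⟨a, b, l, rfl, -⟩ := hγ.exists_eq_cons_cons
    obtain ⟨a', b', l', rfl, -⟩ := hγ'.exists_eq_cons_cons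
    obtain ⟨rfl, rfl⟩ : a = a' ∧ b = b' := by simpa using heq
    exact hγ.eq_of_cons_cons hγ'
  · rintro _ ⟨⟨a, b⟩, hab, rfl⟩
    obtain ⟨l, hl⟩ := exists_isMaximalWalk_cons_cons hT hfin hab
    exact ⟨a :: b :: l, hl, rfl⟩

lemma ncard_isMaximalWalk (hT : T.IsAcyclic) (hfin : A.support.Finite) :
    {γ | T.IsMaximalWalk γ}.ncard = T.terminalDarts.ncard := by
  rw [(bijOn_take_two_isMaximalWalk hT hfin).ncard_eq, Set.ncard_image_of_injective]
  rintro ⟨a, b⟩ ⟨c, d⟩ h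
  simpa using h

end TransitionSystem

end TransitionSystems

section StraightPaths

variable {ε : ℝ} {G : BondGraph}

/-- The bonds of `G`, as a simple graph on the whole plane. -/
def BondGraph.toSimpleGraph (G : BondGraph) : SimpleGraph Pt where
  Adj x y := s(x, y) ∈ G.E
  symm := ⟨fun _ _ h => Sym2.eq_swap ▸ h⟩
  loopless := ⟨fun _ h => BondGraph.ne_of_bond h rfl⟩

lemma BondGraph.support_subset : G.toSimpleGraph.support ⊆ G.V :=
  fun x ⟨_, h⟩ => G.mem_V _ h x (Sym2.mem_mk_left _ _)

lemma BondGraph.finite_nbhd (x : Pt) : (nbhd G x).Finite :=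
  G.finV.subset fun y h => G.mem_V _ h y (Sym2.mem_mk_right _ _)

/-- The transition system matching opposite bonds, whose walks are the straight ones. -/
def straightTransitions (hε : ε < π / 6) (hang : HasRegularAngles ε G) :
    TransitionSystem G.toSimpleGraph where
  Passes a b c := s(a, b) ∈ G.E ∧ s(b, c) ∈ G.E ∧
    cwAngle (c - b) (a - b) ∈ Set.Icc (π - ε) (π + ε)
  adj_left h := h.1
  symm {a b c} h := by
    obtain ⟨κ, -, hκ⟩ := exists_direction_label hε hang b
    obtain ⟨hab, hbc, hangle⟩ := h
    rw [Sym2.eq_swap] at hab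
    refine ⟨Sym2.eq_swap ▸ hbc, hab, (hκ a hab c hbc).2 ?_⟩
    rw [(hκ c hbc a hab).1 hangle, add_assoc, left_eq_add]
    rfl
  right_unique {a b c d} hc hd := by
    obtain ⟨κ, hinj, hκ⟩ := exists_direction_label hε hang b
    obtain ⟨hab, hbc, hac⟩ := hc
    obtain ⟨-, hbd, had⟩ := hd
    rw [Sym2.eq_swap] at hab
    exact hinj hbc hbd (((hκ c hbc a hab).1 hac).trans ((hκ d hbd a hab).1 had).symm)
  irrefl {a b} h := by
    obtain ⟨κ, -, hκ⟩ := exists_direction_label hε hang b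
    exact absurd (left_eq_add.1 ((hκ a h.2.1 a h.2.1).1 h.2.2)) (by decide)

lemma pathEdges_cons_cons (a b : Pt) (l : List Pt) :
    pathEdges (a :: b :: l) = s(a, b) :: pathEdges (b :: l) := rfl

lemma mem_of_mem_pathEdges {l : List Pt} {e : Sym2 Pt} (he : e ∈ pathEdges l) {x : Pt}
    (hx : x ∈ e) : x ∈ l := by
  obtain ⟨⟨a, b⟩, hab, rfl⟩ := List.mem_map.1 he
  obtain ⟨ha, hb⟩ := List.of_mem_zip hab
  rcases Sym2.mem_iff.1 hx with rfl | rfl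
  · exact ha
  · exact List.mem_of_mem_tail hb

lemma nodup_pathEdges {l : List Pt} (h : l.Nodup) : (pathEdges l).Nodup := by
  induction l with
  | nil => exact List.nodup_nil
  | cons a l ih =>
    rcases l with _ | ⟨b, l⟩
    · exact List.nodup_nil
    · obtain ⟨ha, hl⟩ := List.nodup_cons.1 h
      exact List.nodup_cons.2
        ⟨fun hab => ha (mem_of_mem_pathEdges hab (Sym2.mem_mk_left a b)), ih hl⟩

lemma nodup_pathEdges_cycle {a : Pt} {l : List Pt} (hlen : 2 ≤ l.length)
    (h : (l ++ [a]).Nodup) : (pathEdges (a :: (l ++ [a]))).Nodup := by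
  rcases l with _ | ⟨b, _ | ⟨c, l⟩⟩
  · simp at hlen
  · simp at hlen
  refine List.nodup_cons.2 ⟨fun hab => ?_, nodup_pathEdges h⟩
  replace hab : s(a, b) ∈ pathEdges (b :: c :: (l ++ [a])) := hab
  obtain ⟨hb, hc⟩ : b ∉ c :: (l ++ [a]) ∧ c ∉ l ++ [a] :=
    ⟨(List.nodup_cons.1 h).1, (List.nodup_cons.1 (List.nodup_cons.1 h).2).1⟩
  rw [pathEdges_cons_cons, List.mem_cons, Sym2.eq_swap, Sym2.congr_right] at hab
  rcases hab with rfl | hab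
  · exact hc (by simp)
  · exact hb (mem_of_mem_pathEdges hab (Sym2.mem_mk_left b a))

lemma infix_triple_iff {γ : List Pt} {a b c : Pt} : [a, b, c] <:+: γ ↔
    ∃ i, i + 2 < γ.length ∧ nth γ i = a ∧ nth γ (i + 1) = b ∧ nth γ (i + 2) = c := by
  rw [List.infix_iff_getElem?]
  constructor
  · rintro ⟨i, hi, h⟩
    have hnth : ∀ j (hj : j < 3), nth γ (j + i) = [a, b, c][j] := fun j hj => by
      rw [nth, List.getD_eq_getElem?_getD, h j hj, Option.getD_some]
    rw [add_comm] at hi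
    exact ⟨i, hi, by simpa using hnth 0, by simpa [add_comm] using hnth 1,
      by simpa [add_comm] using hnth 2⟩
  · rintro ⟨i, hi, rfl, rfl, rfl⟩
    have hnth : ∀ k < γ.length, γ[k]? = some (nth γ k) := fun k hk => by simp [nth, hk]
    refine ⟨i, by rw [List.length_cons, add_comm]; exact hi, fun j hj => ?_⟩
    simp only [List.length_cons, List.length_nil] at hj
    rw [hnth _ (by omega)]
    interval_cases j <;> simp [add_comm]

lemma isStraightPath_iff (hε : ε < π / 6) (hang : HasRegularAngles ε G) (γ : List Pt) :
    IsStraightPath ε G γ ↔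
      2 ≤ γ.length ∧ (straightTransitions hε hang).IsWalk γ ∧ (pathEdges γ).Nodup := by
  constructor
  · rintro ⟨hlen, -, hchain, hangle, hnodup⟩
    refine ⟨hlen, ⟨hchain, fun {a b c} habc => ?_⟩, hnodup⟩
    have hbonds : [a, b, c].IsChain fun a b => s(a, b) ∈ G.E := List.IsChain.infix hchain habc
    obtain ⟨i, hi, rfl, rfl, rfl⟩ := infix_triple_iff.1 habc
    simp only [List.isChain_cons_cons, List.isChain_singleton, and_true] at hbonds
    exact ⟨hbonds.1, hbonds.2, hangle i hi⟩
  · rintro ⟨hlen, hwalk, hnodup⟩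
    refine ⟨hlen, fun x hx => BondGraph.support_subset (hwalk.mem_support hlen hx), hwalk.isChain,
      fun i hi => ?_, hnodup⟩
    exact (hwalk.passes (infix_triple_iff.2 ⟨i, hi, rfl, rfl, rfl⟩)).2.2

lemma isAcyclic_straightTransitions (hε : ε < π / 6) (hang : HasRegularAngles ε G)
    (hopen : ∀ γ : List Pt, IsStraightPath ε G γ → ¬ IsClosedPath γ) :
    (straightTransitions hε hang).IsAcyclic := by
  refine TransitionSystem.isAcyclic_of_forall_cycle fun a l hlen hnodup hwalk => ?_
  refine hopen (a :: (l ++ [a])) ((isStraightPath_iff hε hang _).2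
    ⟨by simp, hwalk, nodup_pathEdges_cycle hlen hnodup⟩) ?_
  rw [IsClosedPath, ← List.cons_append, List.getLast?_concat, List.cons_append, List.head?_cons]

lemma isMaximalStraight_iff (hε : ε < π / 6) (hang : HasRegularAngles ε G)
    (hT : (straightTransitions hε hang).IsAcyclic) (γ : List Pt) :
    IsMaximalStraight ε G γ ↔ (straightTransitions hε hang).IsMaximalWalk γ := by
  have hpath : ∀ γ, IsStraightPath ε G γ ↔
      2 ≤ γ.length ∧ (straightTransitions hε hang).IsWalk γ := fun γ => by
    rw [isStraightPath_iff hε hang, and_congr_right_iff]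
    exact fun _ => and_iff_left_of_imp fun hwalk => nodup_pathEdges (hT γ hwalk)
  constructor
  · rintro ⟨hγ, hmax⟩
    obtain ⟨hlen, hwalk⟩ := (hpath γ).1 hγ
    refine ⟨hlen, hwalk, fun γ' hγ' hsub => (hsub.eq_of_length ?_).symm⟩
    rcases hmax γ' ((hpath γ').2 ⟨hlen.trans hsub.length_le, hγ'⟩) (Or.inl hsub) with rfl | rfl
    · rfl
    · exact List.length_reverse.symm
  · rintro ⟨hlen, hwalk, hmax⟩
    refine ⟨(hpath γ).2 ⟨hlen, hwalk⟩, fun γ' hγ' hsub => ?_⟩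
    have hwalk' := ((hpath γ').1 hγ').2
    rcases hsub with hsub | hsub
    · exact Or.inl (hmax γ' hwalk' hsub)
    · exact Or.inr (List.reverse_eq_iff.1 (hmax _ hwalk'.reverse hsub))

end StraightPaths

section Counting

variable {ε : ℝ} {G : BondGraph}

lemma ncard_eq_finsum_mem_ncard_fiber {α β : Type*} {s : Set α} (hs : s.Finite) {R : Set (α × β)}
    (hR : R.Finite) (hRs : ∀ p ∈ R, p.1 ∈ s) :
    R.ncard = ∑ᶠ a ∈ s, (Prod.mk a ⁻¹' R).ncard := by
  have hunion : R = ⋃ a ∈ s, Prod.mk a '' (Prod.mk a ⁻¹' R) := by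
    ext ⟨a, b⟩
    simpa using fun hab => hRs (a, b) hab
  conv_lhs => rw [hunion]
  have hfiber (a : α) : (Prod.mk a ⁻¹' R).Finite := hR.preimage (Prod.mk_right_injective a).injOn
  rw [hs.ncard_biUnion fun a _ => (hfiber a).image _]
  · exact finsum_mem_congr rfl fun a _ => Set.ncard_image_of_injective _ (Prod.mk_right_injective a)
  · intro a _ a' _ hne
    refine Set.disjoint_left.2 ?_
    rintro _ ⟨b, -, rfl⟩ ⟨b', -, h⟩
    exact hne (congrArg Prod.fst h).symm

/-- The stratum of a list of points, that is, its class up to reversal. -/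
def toStratum (γ : List Pt) : Stratum := Quotient.mk revSetoid γ

lemma toStratum_eq_iff {γ γ' : List Pt} :
    toStratum γ = toStratum γ' ↔ γ = γ' ∨ γ = γ'.reverse :=
  Quotient.eq (r := revSetoid)

lemma ncard_eq_two_mul_ncard_image_toStratum {M : Set (List Pt)} (hfin : M.Finite)
    (hrev : ∀ γ ∈ M, γ.reverse ∈ M) (hne : ∀ γ ∈ M, γ.reverse ≠ γ) :
    M.ncard = 2 * (toStratum '' M).ncard := by
  classical
  lift M to Finset (List Pt) using hfin
  rw [← Finset.coe_image, Set.ncard_coe_finset, Set.ncard_coe_finset, mul_comm,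
    Finset.card_eq_sum_card_image toStratum, Finset.sum_const_nat]
  intro _ hs
  obtain ⟨γ, hγ, rfl⟩ := Finset.mem_image.1 hs
  have hfiber : M.filter (fun γ' => toStratum γ' = toStratum γ) = {γ, γ.reverse} := by
    ext γ'
    simp only [Finset.mem_filter, toStratum_eq_iff, Finset.mem_insert, Finset.mem_singleton,
      and_iff_right_iff_imp]
    rintro (rfl | rfl)
    · exact hγ
    · exact hrev γ hγ
  rw [hfiber, Finset.card_pair (hne γ hγ).symm]

open scoped Classical in
/-- The number of times that the one-point stratum `(x)` occurs among the strata of `G`. -/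
def pointMultiplicity (ε : ℝ) (G : BondGraph) (x : Pt) : ℕ :=
  if deg G x = 0 then 2 else if deg G x = 1 ∨ V2pi ε G x then 1 else 0

lemma pointMultiplicity_le_two (x : Pt) : pointMultiplicity ε G x ≤ 2 := by
  unfold pointMultiplicity
  split_ifs <;> simp

/- The four directions form two axes. An axis carrying two bonds contributes `0` to each side, an
axis carrying one bond contributes `1`, and an empty axis contributes `2`. -/
lemma four_sub_card_directions (S : Finset (ZMod 4)) :
    (4 : ℤ) - S.card = (S.filter fun s => s + 2 ∉ S).card +
      2 * ((if S.card = 0 then 2 else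
        if S.card = 1 ∨ S.card = 2 ∧ ∃ s ∈ S, s + 2 ∈ S then 1 else 0 : ℕ) : ℤ) := by
  revert S
  decide

lemma V2pi_iff (hε : ε < π / 6) (hang : HasRegularAngles ε G) (x : Pt) :
    V2pi ε G x ↔ deg G x = 2 ∧ ∃ y z, (straightTransitions hε hang).Passes y x z := by
  constructor
  · rintro ⟨-, z, y, hzy, hN, hangle⟩
    have hz : z ∈ nbhd G x := by simp [hN]
    have hy : s(y, x) ∈ G.E := by
      rw [Sym2.eq_swap]
      exact (by simp [hN] : y ∈ nbhd G x)
    exact ⟨by rw [deg, hN, Set.ncard_pair hzy], y, z, hy, hz, hangle⟩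
  · rintro ⟨hdeg, y, z, hpass⟩
    have hzy : z ≠ y := by
      rintro rfl
      exact (straightTransitions hε hang).irrefl hpass
    obtain ⟨hy, hz, hangle⟩ := hpass
    rw [Sym2.eq_swap] at hy
    refine ⟨G.mem_V _ hz x (Sym2.mem_mk_left _ _), z, y, hzy, Eq.symm ?_, hangle⟩
    refine Set.eq_of_subset_of_ncard_le ?_ ?_ (BondGraph.finite_nbhd x)
    · exact Set.insert_subset hz (Set.singleton_subset_iff.2 hy)
    · rw [Set.ncard_pair hzy, ← deg, hdeg]

lemma exists_direction_label_passes (hε : ε < π / 6) (hang : HasRegularAngles ε G) (x : Pt) :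
    ∃ κ : Pt → ZMod 4, Set.InjOn κ (nbhd G x) ∧ ∀ y z,
      (straightTransitions hε hang).Passes z x y ↔
        y ∈ nbhd G x ∧ z ∈ nbhd G x ∧ κ z = κ y + 2 := by
  obtain ⟨κ, hinj, hκ⟩ := exists_direction_label hε hang x
  refine ⟨κ, hinj, fun y z => ⟨fun h => ?_, fun ⟨hy, hz, h⟩ => ?_⟩⟩
  · obtain ⟨hy, hz, hangle⟩ := (straightTransitions hε hang).symm h
    rw [Sym2.eq_swap] at hy
    exact ⟨hy, hz, (hκ z hz y hy).1 hangle⟩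
  · refine (straightTransitions hε hang).symm ⟨?_, hz, (hκ z hz y hy).2 h⟩
    rwa [Sym2.eq_swap]

lemma four_sub_deg (hε : ε < π / 6) (hang : HasRegularAngles ε G) (x : Pt) :
    (4 : ℤ) - deg G x = (Prod.mk x ⁻¹' (straightTransitions hε hang).terminalDarts).ncard +
      2 * pointMultiplicity ε G x := by
  classical
  obtain ⟨κ, hinj, hpass⟩ := exists_direction_label_passes hε hang x
  obtain ⟨S, hS⟩ : ∃ S : Finset (ZMod 4), S = κ '' nbhd G x :=
    ⟨_, Set.Finite.coe_toFinset (Set.toFinite _)⟩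
  have hmem : ∀ s, s ∈ S ↔ ∃ y ∈ nbhd G x, κ y = s := fun s => Set.ext_iff.1 hS s
  have hdeg : deg G x = S.card := by
    rw [deg, ← hinj.ncard_image, ← hS, Set.ncard_coe_finset]
  have hterm : (Prod.mk x ⁻¹' (straightTransitions hε hang).terminalDarts).ncard =
      (S.filter fun s => s + 2 ∉ S).card := by
    have hsub : Prod.mk x ⁻¹' (straightTransitions hε hang).terminalDarts ⊆ nbhd G x :=
      fun y hy => hy.1
    rw [← (hinj.mono hsub).ncard_image, ← Set.ncard_coe_finset]
    congr 1
    ext s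
    simp only [Finset.coe_filter, Set.mem_ofPred_eq, Set.mem_image, hmem]
    constructor
    · rintro ⟨y, ⟨hy, hfree⟩, rfl⟩
      exact ⟨⟨y, hy, rfl⟩, fun ⟨z, hz, h⟩ => hfree z ((hpass y z).2 ⟨hy, hz, h⟩)⟩
    · rintro ⟨⟨y, hy, rfl⟩, hfree⟩
      exact ⟨y, ⟨hy, fun z h => hfree ⟨z, ((hpass y z).1 h).2⟩⟩, rfl⟩
  have hV2pi : V2pi ε G x ↔ S.card = 2 ∧ ∃ s ∈ S, s + 2 ∈ S := by
    rw [V2pi_iff hε hang, hdeg]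
    refine and_congr_right fun _ => ⟨?_, ?_⟩
    · rintro ⟨z, y, h⟩
      obtain ⟨hy, hz, hlabel⟩ := (hpass y z).1 h
      exact ⟨κ y, (hmem _).2 ⟨y, hy, rfl⟩, (hmem _).2 ⟨z, hz, hlabel⟩⟩
    · rintro ⟨s, hs, hs2⟩
      obtain ⟨⟨y, hy, rfl⟩, ⟨z, hz, hlabel⟩⟩ := And.intro ((hmem _).1 hs) ((hmem _).1 hs2)
      exact ⟨z, y, (hpass y z).2 ⟨hy, hz, hlabel⟩⟩
  rw [hterm, pointMultiplicity, hdeg]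
  simp only [hV2pi]
  convert four_sub_card_directions S

lemma strataSet_eq_union :
    strataSet ε G = (·, 0) '' (toStratum '' {γ | IsMaximalStraight ε G γ}) ∪
      Prod.map (fun x => toStratum [x]) id ''
        {p : Pt × Fin 2 | p.1 ∈ G.V ∧ p.2.val < pointMultiplicity ε G p.1} := by
  have hpos (x : Pt) : 0 < pointMultiplicity ε G x ↔
      deg G x = 0 ∨ deg G x = 1 ∨ V2pi ε G x := by
    unfold pointMultiplicity
    split_ifs <;> simp_all
  have hone_lt (x : Pt) : 1 < pointMultiplicity ε G x ↔ deg G x = 0 := by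
    unfold pointMultiplicity
    split_ifs <;> simp_all
  ext p
  constructor
  · rintro ((⟨γ, hγ, rfl⟩ | ⟨x, hx, hdeg, rfl | rfl⟩) | ⟨x, hx, hdeg, rfl⟩)
    · exact Or.inl ⟨_, ⟨γ, hγ, rfl⟩, rfl⟩
    · exact Or.inr ⟨(x, 0), ⟨hx, (hpos x).2 (Or.inl hdeg)⟩, rfl⟩
    · exact Or.inr ⟨(x, 1), ⟨hx, (hone_lt x).2 hdeg⟩, rfl⟩
    · exact Or.inr ⟨(x, 0), ⟨hx, (hpos x).2 (Or.inr hdeg)⟩, rfl⟩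
  · rintro (⟨_, ⟨γ, hγ, rfl⟩, rfl⟩ | ⟨⟨x, i⟩, ⟨hx, hi⟩, rfl⟩)
    · exact Or.inl (Or.inl ⟨γ, hγ, rfl⟩)
    fin_cases i
    · rcases (hpos x).1 hi with hdeg | hdeg
      · exact Or.inl (Or.inr ⟨x, hx, hdeg, Or.inl rfl⟩)
      · exact Or.inr ⟨x, hx, hdeg, rfl⟩
    · exact Or.inl (Or.inr ⟨x, hx, (hone_lt x).1 hi, Or.inr rfl⟩)

lemma ncard_strataSet (hfin : {γ | IsMaximalStraight ε G γ}.Finite) :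
    (strataSet ε G).ncard =
      (toStratum '' {γ | IsMaximalStraight ε G γ}).ncard +
        ∑ᶠ x ∈ G.V, pointMultiplicity ε G x := by
  have hinj : Function.Injective fun x : Pt => toStratum [x] := fun x y h => by
    simpa using toStratum_eq_iff.1 h
  have hpoints : {p : Pt × Fin 2 | p.1 ∈ G.V ∧ p.2.val < pointMultiplicity ε G p.1}.Finite :=
    (G.finV.prod Set.finite_univ).subset fun p hp => ⟨hp.1, Set.mem_univ _⟩
  rw [strataSet_eq_union, Set.ncard_union_eq ?_ ((hfin.image _).image _) (hpoints.image _),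
    Set.ncard_image_of_injective _ (Prod.mk_left_injective 0),
    Set.ncard_image_of_injective _ (hinj.prodMap Function.injective_id),
    ncard_eq_finsum_mem_ncard_fiber G.finV hpoints fun p hp => hp.1]
  · refine congrArg _ (finsum_mem_congr rfl fun x hx => ?_)
    have hfiber : Prod.mk x ⁻¹' {p : Pt × Fin 2 | p.1 ∈ G.V ∧ p.2.val < pointMultiplicity ε G p.1} =
        {i | i.val < pointMultiplicity ε G x} := by
      ext i
      exact and_iff_right hx
    rw [hfiber, Set.ncard_eq_toFinset_card', Set.toFinset_ofPred, Fin.card_filter_val_lt,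
      min_eq_right (pointMultiplicity_le_two x)]
  · rw [Set.disjoint_left]
    rintro _ ⟨_, ⟨γ, hγ, rfl⟩, rfl⟩ ⟨⟨x, i⟩, -, h⟩
    have hlen := hγ.1.1
    rcases toStratum_eq_iff.1 (congrArg Prod.fst h).symm with rfl | rfl <;> simp at hlen

lemma finite_terminalDarts (hε : ε < π / 6) (hang : HasRegularAngles ε G) :
    (straightTransitions hε hang).terminalDarts.Finite :=
  (G.finV.prod G.finV).subset fun _ hd =>
    ⟨BondGraph.support_subset ⟨_, hd.1⟩, BondGraph.support_subset ⟨_, hd.1.symm⟩⟩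

lemma Fbond_eq_ncard_terminalDarts_add (hε : ε < π / 6) (hang : HasRegularAngles ε G) :
    Fbond G = (straightTransitions hε hang).terminalDarts.ncard +
      2 * ((∑ᶠ x ∈ G.V, pointMultiplicity ε G x : ℕ) : ℤ) := by
  rw [ncard_eq_finsum_mem_ncard_fiber G.finV (finite_terminalDarts hε hang)
      fun _ hd => BondGraph.support_subset ⟨_, hd.1⟩,
    Nat.cast_finsum_mem G.finV, Nat.cast_finsum_mem G.finV, mul_finsum_mem,
    ← finsum_mem_add_distrib G.finV]
  exact finsum_mem_congr rfl fun x _ => four_sub_deg hε hang x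

lemma finite_isMaximalStraight (hε : ε < π / 6) (hang : HasRegularAngles ε G)
    (hopen : ∀ γ : List Pt, IsStraightPath ε G γ → ¬ IsClosedPath γ) :
    {γ | IsMaximalStraight ε G γ}.Finite := by
  have hT := isAcyclic_straightTransitions hε hang hopen
  simp only [isMaximalStraight_iff hε hang hT]
  exact (TransitionSystem.bijOn_take_two_isMaximalWalk hT
    (G.finV.subset BondGraph.support_subset)).finite_iff_finite.2
      ((finite_terminalDarts hε hang).image _)

lemma ncard_terminalDarts (hε : ε < π / 6) (hang : HasRegularAngles ε G)
    (hopen : ∀ γ : List Pt, IsStraightPath ε G γ → ¬ IsClosedPath γ) :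
    (straightTransitions hε hang).terminalDarts.ncard =
      2 * (toStratum '' {γ | IsMaximalStraight ε G γ}).ncard := by
  have hT := isAcyclic_straightTransitions hε hang hopen
  have hmax := isMaximalStraight_iff hε hang hT
  rw [← TransitionSystem.ncard_isMaximalWalk hT (G.finV.subset BondGraph.support_subset),
    ← ncard_eq_two_mul_ncard_image_toStratum (finite_isMaximalStraight hε hang hopen)]
  · simp only [hmax]
  · exact fun γ hγ => (hmax _).2 ((hmax γ).1 hγ).reverse
  · intro γ hγ hrev
    refine hopen γ hγ.1 ?_
    rw [IsClosedPath, ← List.head?_reverse, hrev]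

end Counting

theorem bond_energy_eq_twice_strata_general (ε : ℝ) (hε : ε < π / 6) (G : BondGraph)
    (hang : HasRegularAngles ε G)
    (hopen : ∀ γ : List Pt, IsStraightPath ε G γ → ¬ IsClosedPath γ) :
    Fbond G = 2 * ((strataSet ε G).ncard : ℤ) := by
  rw [Fbond_eq_ncard_terminalDarts_add hε hang, ncard_terminalDarts hε hang hopen,
    ncard_strataSet (finite_isMaximalStraight hε hang hopen)]
  push_cast
  ring

/-- **Lemma (properties of graphs containing only open paths, (ii)).**
`F_bond(G) = Σ_{x ∈ V} (4 − #N(x,E)) = 2·#S(G)`. -/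
theorem bond_energy_eq_twice_strata (ε : ℝ) (hε0 : 0 < ε) (hε : ε < π / 6)
    (G : BondGraph) (hreg : EpsRegular ε G)
    (hopen : ∀ γ : List Pt, IsStraightPath ε G γ → ¬ IsClosedPath γ) :
    Fbond G = ∑ᶠ x ∈ G.V, ((4 : ℤ) - (deg G x : ℤ)) ∧
      Fbond G = 2 * ((strataSet ε G).ncard : ℤ) :=
  ⟨rfl, bond_energy_eq_twice_strata_general ε hε G hreg.2 hopen⟩

end
end

section
/- Let ε ∈ (0, π/6), let r₀ ∈ (1, √2), let v₂, v₃ be potentials satisfying assumptions (i₂)–(iii₂) and (i₃)–(iv₃), and let G = (V,E) be an ε-regular graph. Then there exists E_o ⊆ E such that the graph G_o = (V, E_o) satisfies: (i) θ_ex(γ) < π/6 − ε for every straight path γ of G_o; and (ii) F(G) ≥ F_bond(G_o), with equality in (ii) only if E = E_o, |x−y| = 1 for all x ∈ V and y ∈ N(x,E), and every bond angle of G lies in {π/2, π, 3π/2}. -/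
open scoped Real

noncomputable section

/-- Assumptions (i₂)–(iii₂) on the two-body potential. -/
structure V2Hyp (ε r0 : ℝ) (v2 : ℝ → EReal) : Prop where
  eq_neg_one : v2 1 = -1
  ge_neg_one : ∀ r : ℝ, 0 ≤ r → -1 ≤ v2 r
  gt_neg_one : ∀ r : ℝ, 0 ≤ r → r ≠ 1 → -1 < v2 r
  eq_zero : ∀ r : ℝ, r0 ≤ r → v2 r = 0
  repulsive : ∀ r : ℝ, 0 ≤ r → r ≤ 1 - ε → ((ε⁻¹ : ℝ) : EReal) < v2 r

/-- Assumptions (i₃)–(iv₃) on the three-body potential. -/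
structure V3Hyp (ε : ℝ) (v3 : ℝ → ℝ) : Prop where
  symm : ∀ θ : ℝ, 0 ≤ θ → θ ≤ 2 * π → v3 θ = v3 (2 * π - θ)
  zero_pi_half : v3 (π / 2) = 0
  zero_pi : v3 π = 0
  zero_three_pi_half : v3 (3 * π / 2) = 0
  pos : ∀ θ : ℝ, 0 ≤ θ → θ ≤ 2 * π → θ ∉ ({π / 2, π, 3 * π / 2} : Set ℝ) → 0 < v3 θ
  slope : ∀ θ ∈ Set.Icc (π - ε) (π + ε), 4 * (π / 6 - ε)⁻¹ * |θ - π| ≤ v3 θ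
  slope_eq : ∀ θ ∈ Set.Icc (π - ε) (π + ε), v3 θ = 4 * (π / 6 - ε)⁻¹ * |θ - π| → θ = π
  large : ∀ θ : ℝ, 0 ≤ θ → θ ≤ 2 * π →
    θ ∉ Set.Icc (π / 2 - ε) (π / 2 + ε) ∪ Set.Icc (π - ε) (π + ε) ∪
        Set.Icc (3 * π / 2 - ε) (3 * π / 2 + ε) →
    4 / (1 - ε) ^ 2 * (Real.sqrt 2 + 1 / 2) ^ 2 < v3 θ

/-- The length of an (unordered) edge. -/
noncomputable def edgeLen : Sym2 Pt → ℝ :=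
  Sym2.lift ⟨fun x y => dist x y, fun x y => dist_comm x y⟩

/-- Ordered triples `(x, y, z)` with edges `{x,y}, {z,y} ∈ E` sharing the vertex `y`
and `x ≠ z`; each unordered pair of distinct edges sharing a vertex corresponds to
exactly two such triples. -/
def triples (G : BondGraph) : Set (Pt × Pt × Pt) :=
  {t | s(t.1, t.2.1) ∈ G.E ∧ s(t.2.2, t.2.1) ∈ G.E ∧ t.1 ≠ t.2.2}

/-- The excess energy `F_ex(G)`. -/
noncomputable def Fex (v2 : ℝ → EReal) (v3 : ℝ → ℝ) (G : BondGraph) : EReal :=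
  (∑ᶠ e ∈ G.E, (v2 (edgeLen e) + 1))
    + (((1 / 2 : ℝ) * ∑ᶠ t ∈ triples G, v3 (cwAngle (t.1 - t.2.1) (t.2.2 - t.2.1)) : ℝ) : EReal)

/-- The total graph energy `F(G) = F_bond(G) + F_ex(G)`. -/
noncomputable def Fgraph (v2 : ℝ → EReal) (v3 : ℝ → ℝ) (G : BondGraph) : EReal :=
  ((Fbond G : ℝ) : EReal) + Fex v2 v3 G

/-! The angle between two bonds is measured by the turning angle `π - ∠ x y z` of a path through
`x`, `y`, `z`. Since bond angles exceed `2 ε`, an edge has at most one continuation that turns by at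
most `ε`, so two straight paths sharing an oriented edge agree as long as both of them run.

Call a straight path critical if its excess is at least `δ = π / 6 - ε` but drops below `δ` once its
first vertex is removed, and delete the two end edges of each path in a maximal family of critical
paths no two of which share a corner. A straight path of excess at least `δ` in the remaining graph
would contain a critical one; by maximality this shares a corner with a member `f` of the family,
and as it avoids the end edges of `f` it is a part of `f` without the first corner, so its excess is
less than `δ`. The deletion creates a bond energy of at most `4` per member of the family, while the
angles along this member carry an energy of more than `4 / δ` times its excess, hence more than `4`.
-/

lemma exists_maximal_disjoint_subfamily {ι α : Type*} {t : Set ι} {B : ι → Finset α}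
    {U : Finset α} (hne : ∀ i ∈ t, (B i).Nonempty) (hU : ∀ i ∈ t, B i ⊆ U) :
    ∃ u : Finset ι, ↑u ⊆ t ∧ (u : Set ι).PairwiseDisjoint B ∧
      ∀ i ∈ t, ∃ j ∈ u, ¬Disjoint (B i) (B j) := by
  obtain ⟨u, hut, hdisj, hmax⟩ := Vitali.exists_disjoint_subfamily_covering_enlargement
    (fun i => (B i : Set α)) t 0 2 one_lt_two (fun _ _ => le_rfl) 0 (fun _ _ => le_rfl)
    fun i hi => Finset.coe_nonempty.2 (hne i hi)
  have hdisj : u.PairwiseDisjoint B := fun i hi j hj h => Finset.disjoint_coe.1 (hdisj hi hj h)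
  have injOn : u.InjOn B := fun i hi j hj h => hdisj.elim hi hj fun hij =>
    (hne i (hut hi)).ne_empty (disjoint_self.1 (h ▸ hij))
  obtain ⟨u, rfl⟩ := (Set.Finite.of_injOn (fun i hi => Finset.mem_powerset.2 (hU i (hut hi))) injOn
    U.powerset.finite_toSet).exists_finset_coe
  refine ⟨u, hut, hdisj, fun i hi => ?_⟩
  obtain ⟨j, hj, hij, -⟩ := hmax i hi
  exact ⟨j, hj, fun h => Set.not_disjoint_iff_nonempty_inter.2 hij (Finset.disjoint_coe.2 h)⟩

section Sequences

variable {P : Type*}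

/-- The path `f 0, …, f (n + 1)` traversed backwards. -/
def revSeq (n : ℕ) (f : ℕ → P) : ℕ → P := fun k => f (n + 1 - k)

lemma revSeq_eq {n k l : ℕ} (h : k + l = n + 1) (f : ℕ → P) : revSeq n f k = f l := by
  rw [revSeq, ← h, Nat.add_sub_cancel_left]

open scoped Classical in
/-- The corners of the path `f 0, …, f (n + 1)`: triples of consecutive vertices, taken in
both directions because `triples` is symmetric as well. -/
def corners (n : ℕ) (f : ℕ → P) : Finset (P × P × P) :=
  (Finset.range n).image (fun i => (f i, f (i + 1), f (i + 2))) ∪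
    (Finset.range n).image (fun i => (f (i + 2), f (i + 1), f i))

lemma mem_corners {n : ℕ} {f : ℕ → P} {t : P × P × P} : t ∈ corners n f ↔ ∃ i < n,
    t = (f i, f (i + 1), f (i + 2)) ∨ t = (f (i + 2), f (i + 1), f i) := by
  simp only [corners, Finset.mem_union, Finset.mem_image, Finset.mem_range, eq_comm (a := t)]
  grind

open scoped Classical in
/-- The first and the last edge of the path `f 0, …, f (n + 1)`. -/
def endEdges (n : ℕ) (f : ℕ → P) : Finset (Sym2 P) := {s(f 0, f 1), s(f n, f (n + 1))}

lemma mem_endEdges {n : ℕ} {f : ℕ → P} {e : Sym2 P} :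
    e ∈ endEdges n f ↔ e = s(f 0, f 1) ∨ e = s(f n, f (n + 1)) := by
  simp [endEdges]

end Sequences

section StraightPaths

open EuclideanGeometry

variable {V P : Type*} [NormedAddCommGroup V] [InnerProductSpace ℝ V] [MetricSpace P]
  [NormedAddTorsor V P] {ε δ : ℝ} {E E' : Set (Sym2 P)} {m n : ℕ} {f g : ℕ → P}

/-- The turning angle at `y` of a path running through `x`, `y`, `z`; it vanishes when the path goes
straight on. -/
def turn (x y z : P) : ℝ := π - ∠ x y z

lemma turn_nonneg (x y z : P) : 0 ≤ turn x y z := sub_nonneg.2 (angle_le_pi x y z)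

lemma turn_comm (x y z : P) : turn x y z = turn z y x := by
  rw [turn, turn, angle_comm]

lemma angle_le_turn_add_turn (x y z z' : P) : ∠ z y z' ≤ turn x y z + turn x y z' := by
  have h := InnerProductGeometry.angle_le_angle_add_angle (z -ᵥ y) (-(x -ᵥ y)) (z' -ᵥ y)
  rwa [InnerProductGeometry.angle_neg_right, InnerProductGeometry.angle_neg_left,
    InnerProductGeometry.angle_comm (z -ᵥ y) (x -ᵥ y)] at h

/-- Any two distinct edges with a common endpoint enclose an angle larger than `η`. -/
def AngleSeparated (η : ℝ) (E : Set (Sym2 P)) : Prop :=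
  ∀ x y z : P, s(x, y) ∈ E → s(z, y) ∈ E → x ≠ z → η < ∠ x y z

lemma AngleSeparated.eq_of_turn_le (hE : AngleSeparated (2 * ε) E) {x y z z' : P}
    (hz : s(z, y) ∈ E) (hz' : s(z', y) ∈ E) (h : turn x y z ≤ ε) (h' : turn x y z' ≤ ε) :
    z = z' := by
  by_contra hne
  linarith [hE z y z' hz hz' hne, angle_le_turn_add_turn x y z z']

/-- The angle excess of the path `f 0, …, f (n + 1)`, which has `n` inner vertices. -/
def excess (n : ℕ) (f : ℕ → P) : ℝ :=
  ∑ i ∈ Finset.range n, turn (f i) (f (i + 1)) (f (i + 2))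

lemma excess_revSeq (n : ℕ) (f : ℕ → P) : excess n (revSeq n f) = excess n f := by
  rw [excess, excess, ← Finset.sum_range_reflect _ n]
  refine Finset.sum_congr rfl fun i hi => ?_
  have hi := Finset.mem_range.1 hi
  rw [turn_comm, revSeq_eq (l := i) (by omega), revSeq_eq (l := i + 1) (by omega),
    revSeq_eq (l := i + 2) (by omega)]

/-- The path `f 0, …, f (n + 1)` uses pairwise distinct edges from `E` and turns by at most `ε` at
each inner vertex. -/
structure IsStraightSeq (ε : ℝ) (E : Set (Sym2 P)) (n : ℕ) (f : ℕ → P) : Prop where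
  edge_mem : ∀ i ≤ n, s(f i, f (i + 1)) ∈ E
  turn_le : ∀ i < n, turn (f i) (f (i + 1)) (f (i + 2)) ≤ ε
  edge_inj : ∀ i ≤ n, ∀ j ≤ n, s(f i, f (i + 1)) = s(f j, f (j + 1)) → i = j

namespace IsStraightSeq

lemma mono (h : E ⊆ E') (hf : IsStraightSeq ε E n f) : IsStraightSeq ε E' n f :=
  ⟨fun i hi => h (hf.edge_mem i hi), hf.turn_le, hf.edge_inj⟩

lemma edge_mem_swap (hf : IsStraightSeq ε E n f) {i : ℕ} (hi : i ≤ n) :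
    s(f (i + 1), f i) ∈ E :=
  Sym2.eq_swap ▸ hf.edge_mem i hi

lemma ne (hf : IsStraightSeq ε E n f) {i : ℕ} (hi : i < n) : f i ≠ f (i + 2) := fun h => by
  have := hf.edge_inj i hi.le (i + 1) hi (by rw [h, Sym2.eq_swap])
  omega

lemma tail (hf : IsStraightSeq ε E (n + 1) f) : IsStraightSeq ε E n (fun k => f (k + 1)) where
  edge_mem i hi := hf.edge_mem (i + 1) (by omega)
  turn_le i hi := hf.turn_le (i + 1) (by omega)
  edge_inj i hi j hj h := Nat.succ_injective (hf.edge_inj (i + 1) (by omega) (j + 1) (by omega) h)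

lemma reverse (hf : IsStraightSeq ε E n f) : IsStraightSeq ε E n (revSeq n f) := by
  have hedge : ∀ i ≤ n,
      s(revSeq n f i, revSeq n f (i + 1)) = s(f (n - i), f (n - i + 1)) := fun i hi => by
    rw [Sym2.eq_swap, revSeq_eq (l := n - i) (by omega), revSeq_eq (l := n - i + 1) (by omega)]
  refine ⟨fun i hi => ?_, fun i hi => ?_, fun i hi j hj hij => ?_⟩
  · rw [hedge i hi]
    exact hf.edge_mem _ (by omega)
  · rw [turn_comm, revSeq_eq (l := n - 1 - i) (by omega),
      revSeq_eq (l := n - 1 - i + 1) (by omega), revSeq_eq (l := n - 1 - i + 2) (by omega)]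
    exact hf.turn_le _ (by omega)
  · rw [hedge i hi, hedge j hj] at hij
    have := hf.edge_inj _ (by omega) _ (by omega) hij
    omega

lemma eq_succ_of_eq (hE : AngleSeparated (2 * ε) E) (hf : IsStraightSeq ε E n f)
    (hg : IsStraightSeq ε E m g) {i j : ℕ} (hi : i < m) (hj : j < n) (h₀ : g i = f j)
    (h₁ : g (i + 1) = f (j + 1)) : g (i + 2) = f (j + 2) := by
  have hmem := hg.edge_mem_swap (i := i + 1) hi
  have hturn := hg.turn_le i hi
  rw [h₁] at hmem
  rw [h₀, h₁] at hturn
  exact hE.eq_of_turn_le hmem (hf.edge_mem_swap (i := j + 1) hj) hturn (hf.turn_le j hj)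

lemma eq_pred_of_eq (hE : AngleSeparated (2 * ε) E) (hf : IsStraightSeq ε E n f)
    (hg : IsStraightSeq ε E m g) {i j : ℕ} (hi : i < m) (hj : j < n)
    (h₁ : g (i + 1) = f (j + 1)) (h₂ : g (i + 2) = f (j + 2)) : g i = f j := by
  have hmem := hg.edge_mem i hi.le
  have hturn := hg.turn_le i hi
  rw [h₁] at hmem
  rw [turn_comm, h₁, h₂] at hturn
  refine hE.eq_of_turn_le hmem (hf.edge_mem j hj.le) hturn ?_
  rw [turn_comm]
  exact hf.turn_le j hj

lemma edge_eq_of_edge_eq (hE : AngleSeparated (2 * ε) E) (hf : IsStraightSeq ε E n f)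
    (hg : IsStraightSeq ε E m g) {i j k l : ℕ} (hi : i ≤ m) (hj : j ≤ n) (h₀ : g i = f j)
    (h₁ : g (i + 1) = f (j + 1)) (hk : k ≤ m) (hl : l ≤ n) (hkl : k + j = l + i) :
    g k = f l ∧ g (k + 1) = f (l + 1) := by
  obtain ⟨t, rfl | rfl⟩ : ∃ t, k = i + t ∨ i = k + t :=
    (le_total i k).elim (fun h => ⟨k - i, by omega⟩) fun h => ⟨i - k, by omega⟩
  · obtain rfl : l = j + t := by omega
    clear hkl
    induction t with
    | zero => exact ⟨h₀, h₁⟩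
    | succ t ih =>
      obtain ⟨e₀, e₁⟩ := ih (by omega) (by omega)
      exact ⟨e₁, eq_succ_of_eq hE hf hg (i := i + t) (j := j + t) (by omega) (by omega) e₀ e₁⟩
  · obtain rfl : j = l + t := by omega
    clear hkl
    induction t with
    | zero => exact ⟨h₀, h₁⟩
    | succ t ih =>
      exact ih (by omega) (by omega)
        (eq_pred_of_eq hE hf hg (by omega) (by omega) h₀ h₁) h₀

end IsStraightSeq

/-- The path `f 0, …, f (n + 1)` has angle excess at least `δ`, but loses this property when its
first vertex is removed. -/
structure IsCritical (δ : ℝ) (n : ℕ) (f : ℕ → P) : Prop where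
  le_excess : δ ≤ excess n f
  tail_lt : ∑ i ∈ Finset.Ico 1 n, turn (f i) (f (i + 1)) (f (i + 2)) < δ

lemma IsCritical.pos (hδ : 0 < δ) (hf : IsCritical δ n f) : 0 < n := by
  rw [Nat.pos_iff_ne_zero]
  rintro rfl
  exact (hδ.trans_le hf.le_excess).ne' (Finset.sum_range_zero _)

lemma IsStraightSeq.exists_isCritical (hδ : 0 < δ) (hf : IsStraightSeq ε E n f)
    (h : δ ≤ excess n f) : ∃ m g, IsStraightSeq ε E m g ∧ IsCritical δ m g := by
  induction n generalizing f with
  | zero => exact absurd h (by simpa [excess] using hδ)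
  | succ n ih =>
    by_cases htail : ∑ i ∈ Finset.Ico 1 (n + 1), turn (f i) (f (i + 1)) (f (i + 2)) < δ
    · exact ⟨n + 1, f, hf, h, htail⟩
    · rw [Finset.sum_Ico_eq_sum_range, not_lt] at htail
      simp only [add_comm 1] at htail
      exact ih hf.tail htail

/-- The path `g` cannot leave `f` without crossing one of its end edges. Hence it misses the first
corner of `f`, and criticality bounds its excess. -/
lemma IsStraightSeq.excess_lt_of_edge_eq (hE : AngleSeparated (2 * ε) E)
    (hf : IsStraightSeq ε E n f) (hcrit : IsCritical δ n f)
    (hg : IsStraightSeq ε (E \ ↑(endEdges n f)) m g) {i j : ℕ} (hi : i ≤ m) (hj : j ≤ n)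
    (h₀ : g i = f j) (h₁ : g (i + 1) = f (j + 1)) : excess m g < δ := by
  have agree : ∀ k l, k ≤ m → l ≤ n → k + j = l + i → g k = f l ∧ g (k + 1) = f (l + 1) :=
    fun k l => hf.edge_eq_of_edge_eq hE (hg.mono Set.sdiff_subset) hi hj h₀ h₁
  have starts_later : i < j := by
    by_contra! hji
    obtain ⟨e₀, e₁⟩ := agree (i - j) 0 (by omega) (by omega) (by omega)
    exact (hg.edge_mem (i - j) (by omega)).2 (mem_endEdges.2 (Or.inl (by rw [e₀, e₁])))
  have ends_earlier : m + j < n + i := by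
    by_contra! hnm
    obtain ⟨e₀, e₁⟩ := agree (i + n - j) n (by omega) le_rfl (by omega)
    exact (hg.edge_mem (i + n - j) (by omega)).2 (mem_endEdges.2 (Or.inr (by rw [e₀, e₁])))
  obtain ⟨d, rfl⟩ := Nat.exists_eq_add_of_lt starts_later
  calc
    excess m g = ∑ k ∈ Finset.range m,
        turn (f (d + 1 + k)) (f (d + 1 + k + 1)) (f (d + 1 + k + 2)) := by
      refine Finset.sum_congr rfl fun k hk => ?_
      have hk := Finset.mem_range.1 hk
      obtain ⟨e₀, e₁⟩ := agree k (d + 1 + k) (by omega) (by omega) (by omega)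
      rw [e₀, e₁, (agree (k + 1) (d + 1 + k + 1) (by omega) (by omega) (by omega)).2]
    _ = ∑ k ∈ Finset.Ico (d + 1) (d + 1 + m), turn (f k) (f (k + 1)) (f (k + 2)) := by
      rw [Finset.sum_Ico_eq_sum_range, Nat.add_sub_cancel_left]
    _ ≤ ∑ k ∈ Finset.Ico 1 n, turn (f k) (f (k + 1)) (f (k + 2)) :=
      Finset.sum_le_sum_of_subset_of_nonneg
        (Finset.Ico_subset_Ico (by omega) (by omega)) fun _ _ _ => turn_nonneg _ _ _
    _ < δ := hcrit.tail_lt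

lemma IsStraightSeq.excess_lt_of_edge_eq_swap (hE : AngleSeparated (2 * ε) E)
    (hf : IsStraightSeq ε E n f) (hcrit : IsCritical δ n f)
    (hg : IsStraightSeq ε (E \ ↑(endEdges n f)) m g) {i j : ℕ} (hi : i ≤ m) (hj : j ≤ n)
    (h₀ : g (i + 1) = f j) (h₁ : g i = f (j + 1)) : excess m g < δ := by
  rw [← excess_revSeq]
  refine hf.excess_lt_of_edge_eq hE hcrit hg.reverse (i := m - i) (by omega) hj ?_ ?_
  · rw [revSeq_eq (l := i + 1) (by omega), h₀]
  · rw [revSeq_eq (l := i) (by omega), h₁]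

/-- The pairs of distinct edges with a common endpoint that continue each other up to a turning
angle of at most `ε`, written as triples with the common endpoint in the middle. -/
def straightCorners (ε : ℝ) (E : Set (Sym2 P)) : Set (P × P × P) :=
  {t | s(t.1, t.2.1) ∈ E ∧ s(t.2.2, t.2.1) ∈ E ∧ t.1 ≠ t.2.2 ∧ turn t.1 t.2.1 t.2.2 ≤ ε}

namespace IsStraightSeq

lemma corners_subset (hf : IsStraightSeq ε E n f) : ↑(corners n f) ⊆ straightCorners ε E := by
  intro t ht
  obtain ⟨i, hi, rfl | rfl⟩ := mem_corners.1 ht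
  · exact ⟨hf.edge_mem i hi.le, hf.edge_mem_swap hi, hf.ne hi, hf.turn_le i hi⟩
  · exact ⟨hf.edge_mem_swap hi, hf.edge_mem i hi.le, (hf.ne hi).symm,
      (turn_comm _ _ _).trans_le (hf.turn_le i hi)⟩

lemma sum_turn_corners (hf : IsStraightSeq ε E n f) :
    ∑ t ∈ corners n f, turn t.1 t.2.1 t.2.2 = 2 * excess n f := by
  classical
  have inj : Set.InjOn (fun i => (f i, f (i + 1), f (i + 2))) (Finset.range n) := by
    intro i hi j hj h
    have hi := Finset.mem_range.1 hi
    have hj := Finset.mem_range.1 hj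
    simp only [Prod.mk.injEq] at h
    exact hf.edge_inj i hi.le j hj.le (by rw [h.1, h.2.1])
  have inj' : Set.InjOn (fun i => (f (i + 2), f (i + 1), f i)) (Finset.range n) := by
    intro i hi j hj h
    simp only [Prod.mk.injEq] at h
    exact inj hi hj (by simp only [h.1, h.2.1, h.2.2])
  rw [corners, Finset.sum_union, Finset.sum_image inj, Finset.sum_image inj', excess, two_mul]
  · simp only [turn_comm (f (_ + 2))]
  · simp only [Finset.disjoint_left, Finset.mem_image, Finset.mem_range]
    rintro _ ⟨i, hi, rfl⟩ ⟨j, hj, h⟩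
    simp only [Prod.mk.injEq] at h
    have h₁ := hf.edge_inj i hi.le (j + 1) hj (by rw [← h.1, ← h.2.1, Sym2.eq_swap])
    have h₂ := hf.edge_inj (i + 1) hi j hj.le (by rw [← h.2.1, ← h.2.2, Sym2.eq_swap])
    omega

lemma excess_lt_of_not_disjoint (hE : AngleSeparated (2 * ε) E) (hf : IsStraightSeq ε E n f)
    (hcrit : IsCritical δ n f) (hg : IsStraightSeq ε (E \ ↑(endEdges n f)) m g)
    (h : ¬Disjoint (corners m g) (corners n f)) : excess m g < δ := by
  obtain ⟨t, htg, htf⟩ := Finset.not_disjoint_iff.1 h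
  obtain ⟨i, hi, hg_eq⟩ := mem_corners.1 htg
  obtain ⟨j, hj, hf_eq⟩ := mem_corners.1 htf
  have same := hf.excess_lt_of_edge_eq hE hcrit hg hi.le hj.le
  have opposite := hf.excess_lt_of_edge_eq_swap hE hcrit hg (j := j + 1) hi.le hj
  rcases hg_eq with rfl | rfl <;> rcases hf_eq with h | h <;> simp only [Prod.mk.injEq] at h
  · exact same h.1 h.2.1
  · exact opposite h.2.1 h.1
  · exact opposite h.2.1 h.2.2
  · exact same h.2.2 h.2.1

end IsStraightSeq

/-- Both orientations of a corner count in the sum, so that a path of excess `δ` contributes `2 * δ`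
and pays for its two end edges. -/
theorem AngleSeparated.exists_finset_excess_lt (hE : AngleSeparated (2 * ε) E)
    (hfin : (straightCorners ε E).Finite) (hδ : 0 < δ) :
    ∃ S : Finset (Sym2 P), (∀ n f, IsStraightSeq ε (E \ ↑S) n f → excess n f < δ) ∧
      S.card * δ ≤ ∑ t ∈ hfin.toFinset, turn t.1 t.2.1 t.2.2 := by
  classical
  obtain ⟨u, hu, hdisj, hmax⟩ := exists_maximal_disjoint_subfamily
    (t := {p : ℕ × (ℕ → P) | IsStraightSeq ε E p.1 p.2 ∧ IsCritical δ p.1 p.2})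
    (B := fun p => corners p.1 p.2) (U := hfin.toFinset)
    (fun p hp => ⟨_, mem_corners.2 ⟨0, hp.2.pos hδ, Or.inl rfl⟩⟩)
    fun p hp => hfin.subset_toFinset.2 hp.1.corners_subset
  refine ⟨u.biUnion fun p => endEdges p.1 p.2, fun m g hg => ?_, ?_⟩
  · by_contra! hlarge
    obtain ⟨m, g, hg, hgcrit⟩ := hg.exists_isCritical hδ hlarge
    obtain ⟨p, hpu, hmeet⟩ := hmax (m, g) ⟨hg.mono Set.sdiff_subset, hgcrit⟩
    have hsub := Finset.subset_biUnion_of_mem (fun p : ℕ × (ℕ → P) => endEdges p.1 p.2) hpu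
    have hg' := hg.mono (Set.sdiff_subset_sdiff_right (Finset.coe_subset.2 hsub))
    exact ((hu hpu).1.excess_lt_of_not_disjoint hE (hu hpu).2 hg' hmeet).not_ge hgcrit.le_excess
  · calc
      ((u.biUnion fun p => endEdges p.1 p.2).card * δ : ℝ) ≤ (u.card * 2 : ℕ) * δ := by
        gcongr
        exact Finset.card_biUnion_le_card_mul _ _ _ fun p _ => Finset.card_le_two
      _ = u.card • (2 * δ) := by push_cast; rw [nsmul_eq_mul, mul_assoc]
      _ ≤ ∑ p ∈ u, ∑ t ∈ corners p.1 p.2, turn t.1 t.2.1 t.2.2 :=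
        Finset.card_nsmul_le_sum _ _ _ fun p hpu => by
          rw [(hu hpu).1.sum_turn_corners]
          linarith [(hu hpu).2.le_excess]
      _ = ∑ t ∈ u.biUnion fun p => corners p.1 p.2, turn t.1 t.2.1 t.2.2 :=
        (Finset.sum_biUnion hdisj).symm
      _ ≤ ∑ t ∈ hfin.toFinset, turn t.1 t.2.1 t.2.2 :=
        Finset.sum_le_sum_of_subset_of_nonneg
          (Finset.biUnion_subset.2 fun p hpu => hfin.subset_toFinset.2 (hu hpu).1.corners_subset)
          fun _ _ _ => turn_nonneg _ _ _

end StraightPaths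

section ClockwiseAngle

open ComplexConjugate

lemma cwAngle_mem_Ico (u v : Pt) : cwAngle u v ∈ Set.Ico 0 (2 * π) := by
  have hneg := Complex.neg_pi_lt_arg (⟨u 0, u 1⟩ * conj (⟨v 0, v 1⟩ : ℂ))
  have hle := Complex.arg_le_pi (⟨u 0, u 1⟩ * conj (⟨v 0, v 1⟩ : ℂ))
  dsimp only [cwAngle]
  split_ifs with h <;> constructor <;> linarith

lemma angle_eq_abs_arg_mul_conj {z w : ℂ} (hz : z ≠ 0) (hw : w ≠ 0) :
    InnerProductGeometry.angle z w = |Complex.arg (z * conj w)| := by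
  rw [Complex.angle_eq_abs_arg hz hw, div_eq_mul_inv, Complex.inv_def, ← mul_assoc,
    Complex.arg_mul_real (inv_pos.2 (Complex.normSq_pos.2 hw))]

lemma orthonormalBasisOneI_repr_symm_eq_mk (u : Pt) :
    Complex.orthonormalBasisOneI.repr.symm u = ⟨u 0, u 1⟩ := by
  rw [Complex.orthonormalBasisOneI_repr_symm_apply, Complex.mk_eq_add_mul_I]

lemma angle_eq_abs_arg_mk_mul_conj_mk {u v : Pt} (hu : u ≠ 0) (hv : v ≠ 0) :
    InnerProductGeometry.angle u v = |Complex.arg (⟨u 0, u 1⟩ * conj (⟨v 0, v 1⟩ : ℂ))| := by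
  rw [← orthonormalBasisOneI_repr_symm_eq_mk, ← orthonormalBasisOneI_repr_symm_eq_mk,
    ← angle_eq_abs_arg_mul_conj ((EmbeddingLike.map_ne_zero_iff).2 hu)
      ((EmbeddingLike.map_ne_zero_iff).2 hv)]
  exact (Complex.orthonormalBasisOneI.repr.symm.toLinearIsometry.angle_map u v).symm

lemma abs_cwAngle_sub_pi {u v : Pt} (hu : u ≠ 0) (hv : v ≠ 0) :
    |cwAngle u v - π| = π - InnerProductGeometry.angle u v := by
  have hneg := Complex.neg_pi_lt_arg (⟨u 0, u 1⟩ * conj (⟨v 0, v 1⟩ : ℂ))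
  have hle := Complex.arg_le_pi (⟨u 0, u 1⟩ * conj (⟨v 0, v 1⟩ : ℂ))
  rw [angle_eq_abs_arg_mk_mul_conj_mk hu hv]
  dsimp only [cwAngle]
  split_ifs with h
  · rw [abs_of_neg h, abs_of_pos] <;> linarith
  · rw [abs_of_nonneg (not_lt.1 h), abs_of_nonpos] <;> linarith

end ClockwiseAngle

section BondGraphs

variable {ε : ℝ} {G : BondGraph}

namespace BondGraph

lemma ne_of_mem {x y : Pt} (h : s(x, y) ∈ G.E) : x ≠ y :=
  fun hxy => G.not_diag _ h (Sym2.mk_isDiag_iff.2 hxy)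

lemma finite_E (G : BondGraph) : G.E.Finite :=
  G.finV.toFinset.sym2.finite_toSet.subset fun e he => Finset.mem_sym2_iff.2 fun x hx =>
    G.finV.mem_toFinset.2 (G.mem_V e he x hx)

lemma finite_triples (G : BondGraph) : (triples G).Finite :=
  (G.finV.prod (G.finV.prod G.finV)).subset fun _ ht =>
    ⟨G.mem_V _ ht.1 _ (by simp), G.mem_V _ ht.1 _ (by simp), G.mem_V _ ht.2.1 _ (by simp)⟩

lemma straightCorners_subset_triples : straightCorners ε G.E ⊆ triples G :=
  fun _ ht => ⟨ht.1, ht.2.1, ht.2.2.1⟩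

lemma abs_cwAngle_sub_pi_eq_turn {x y z : Pt} (hxy : s(x, y) ∈ G.E) (hzy : s(z, y) ∈ G.E) :
    |cwAngle (x - y) (z - y) - π| = turn x y z :=
  abs_cwAngle_sub_pi (sub_ne_zero.2 (ne_of_mem hxy)) (sub_ne_zero.2 (ne_of_mem hzy))

end BondGraph

lemma EpsRegular.angleSeparated (hε : ε < π / 6) (hG : EpsRegular ε G) :
    AngleSeparated (2 * ε) G.E := by
  intro x y z hxy hzy hxz
  have habs : |cwAngle (x - y) (z - y) - π| ≤ π / 2 + ε := by
    rw [abs_le]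
    rcases hG.2 x y z hxy hzy hxz with (⟨h₁, h₂⟩ | ⟨h₁, h₂⟩) | ⟨h₁, h₂⟩ <;> constructor <;> linarith
  rw [BondGraph.abs_cwAngle_sub_pi_eq_turn hxy hzy, turn] at habs
  linarith

lemma nth_eq_getElem (γ : List Pt) {i : ℕ} (hi : i < γ.length) : nth γ i = γ[i] :=
  List.getD_eq_getElem _ _ hi

lemma getElem_pathEdges {γ : List Pt} {i : ℕ} (hi : i < (pathEdges γ).length) :
    (pathEdges γ)[i] = s(nth γ i, nth γ (i + 1)) := by
  have hlen : i + 1 < γ.length := by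
    simp only [pathEdges, List.length_map, List.length_zip, List.length_tail] at hi
    omega
  rw [nth_eq_getElem γ (by omega), nth_eq_getElem γ hlen]
  simp [pathEdges]

namespace IsStraightPath

variable {γ : List Pt}

lemma edge_mem (hγ : IsStraightPath ε G γ) {i : ℕ} (hi : i + 1 < γ.length) :
    s(nth γ i, nth γ (i + 1)) ∈ G.E := by
  rw [nth_eq_getElem γ (by omega), nth_eq_getElem γ hi]
  exact List.isChain_iff_getElem.1 hγ.2.2.1 i hi

lemma abs_pathAngle_sub_pi (hγ : IsStraightPath ε G γ) {i : ℕ} (hi : i + 2 < γ.length) :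
    |pathAngle γ i - π| = turn (nth γ i) (nth γ (i + 1)) (nth γ (i + 2)) := by
  rw [turn_comm]
  refine BondGraph.abs_cwAngle_sub_pi_eq_turn (G := G) ?_ (hγ.edge_mem (by omega))
  rw [Sym2.eq_swap]
  exact hγ.edge_mem hi

lemma isStraightSeq (hγ : IsStraightPath ε G γ) :
    IsStraightSeq ε G.E (γ.length - 2) (nth γ) where
  edge_mem i hi := hγ.edge_mem (by have := hγ.1; omega)
  turn_le i hi := by
    rw [← hγ.abs_pathAngle_sub_pi (by omega), abs_sub_comm, Set.mem_Icc_iff_abs_le]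
    exact hγ.2.2.2.1 i (by omega)
  edge_inj i hi j hj hij := by
    have hlen : (pathEdges γ).length = γ.length - 1 := by simp [pathEdges]
    have := hγ.1
    rw [← getElem_pathEdges (by omega), ← getElem_pathEdges (by omega)] at hij
    exact (hγ.2.2.2.2.getElem_inj_iff).1 hij

lemma thetaEx_eq_excess (hγ : IsStraightPath ε G γ) :
    thetaEx γ = excess (γ.length - 2) (nth γ) :=
  Finset.sum_congr rfl fun i hi =>
    hγ.abs_pathAngle_sub_pi (by have := Finset.mem_range.1 hi; omega)

end IsStraightPath

end BondGraphs

namespace BondGraph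

/-- The graph obtained by deleting all edges in `S`; the vertices are kept. -/
def deleteEdges (G : BondGraph) (S : Set (Sym2 Pt)) : BondGraph where
  V := G.V
  finV := G.finV
  E := G.E \ S
  not_diag e he := G.not_diag e he.1
  mem_V e he := G.mem_V e he.1

open scoped Classical in
lemma deg_eq_card_filter (G : BondGraph) (x : Pt) :
    deg G x = {e ∈ G.finite_E.toFinset | x ∈ e}.card := by
  have himage : (fun y => s(x, y)) '' nbhd G x = ↑{e ∈ G.finite_E.toFinset | x ∈ e} := by
    ext e
    simp only [Set.mem_image, Finset.mem_coe, Finset.mem_filter, Set.Finite.mem_toFinset]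
    constructor
    · rintro ⟨y, hy, rfl⟩
      exact ⟨hy, Sym2.mem_mk_left x y⟩
    · rintro ⟨he, y, rfl⟩
      exact ⟨y, he, rfl⟩
  rw [deg, ← Set.ncard_image_of_injective _ fun y z h => Sym2.congr_right.1 h, himage,
    Set.ncard_coe_finset]

lemma sum_deg_eq_two_mul_ncard_E (G : BondGraph) :
    ∑ x ∈ G.finV.toFinset, deg G x = 2 * G.E.ncard := by
  classical
  have endpoints : ∀ e ∈ G.finite_E.toFinset, {x ∈ G.finV.toFinset | x ∈ e}.card = 2 := by
    intro e he
    have he := G.finite_E.mem_toFinset.1 he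
    refine (congrArg Finset.card ?_).trans (Sym2.card_toFinset_of_not_isDiag e (G.not_diag e he))
    ext x
    simpa using G.mem_V e he x
  calc
    ∑ x ∈ G.finV.toFinset, deg G x
        = ∑ x ∈ G.finV.toFinset, {e ∈ G.finite_E.toFinset | x ∈ e}.card :=
      Finset.sum_congr rfl fun x _ => G.deg_eq_card_filter x
    _ = ∑ e ∈ G.finite_E.toFinset, {x ∈ G.finV.toFinset | x ∈ e}.card :=
      Finset.sum_card_bipartiteAbove_eq_sum_card_bipartiteBelow _
    _ = 2 * G.E.ncard := by
      rw [Finset.sum_const_nat endpoints, Set.ncard_eq_toFinset_card _ G.finite_E, mul_comm]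

lemma Fbond_eq (G : BondGraph) : Fbond G = 4 * G.V.ncard - 2 * G.E.ncard := by
  rw [Fbond, finsum_mem_eq_finite_toFinset_sum _ G.finV, Finset.sum_sub_distrib, Finset.sum_const,
    ← Nat.cast_sum, sum_deg_eq_two_mul_ncard_E, Set.ncard_eq_toFinset_card _ G.finV]
  push_cast
  rw [nsmul_eq_mul, mul_comm]

lemma Fbond_deleteEdges_le (G : BondGraph) (S : Finset (Sym2 Pt)) :
    Fbond (G.deleteEdges S) ≤ Fbond G + 2 * S.card := by
  have h := Set.ncard_le_ncard_sdiff_add_ncard G.E S S.finite_toSet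
  rw [Set.ncard_coe_finset] at h
  rw [Fbond_eq, Fbond_eq]
  simp only [deleteEdges]
  omega

end BondGraph

section ExcessEnergy

lemma ereal_coe_le_add_and_eq_of_add_eq {a : EReal} {p q : ℝ} (ha : 0 ≤ a) (hpq : p ≤ q) :
    (p : EReal) ≤ a + q ∧ (a + q = p → a = 0 ∧ q = p) := by
  have hpq' : (p : EReal) ≤ q := EReal.coe_le_coe_iff.2 hpq
  refine ⟨le_add_of_nonneg_of_le ha hpq', fun h => ?_⟩
  have hqp : (q : EReal) ≤ p := (le_add_of_nonneg_left ha).trans_eq h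
  obtain rfl := le_antisymm (EReal.coe_le_coe_iff.1 hqp) hpq
  induction a with
  | bot => simp at ha
  | top => simp at h
  | coe a => exact ⟨by norm_cast at h ⊢; linarith, rfl⟩

lemma ereal_add_one_nonneg_iff {a : EReal} : 0 ≤ a + 1 ↔ -1 ≤ a := by
  simpa [sub_eq_add_neg] using
    EReal.sub_nonneg (x := a) (y := -1) (.inr (by decide)) (.inr (by decide))

lemma ereal_add_one_eq_zero_iff {a : EReal} : a + 1 = 0 ↔ a = -1 := by
  rw [le_antisymm_iff, le_antisymm_iff, ereal_add_one_nonneg_iff]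
  simpa [sub_eq_add_neg] using fun _ => EReal.sub_nonpos (x := a) (y := -1)

lemma edgeLen_nonneg (e : Sym2 Pt) : 0 ≤ edgeLen e := by
  induction e with
  | _ x y => exact dist_nonneg (x := x) (y := y)

/-- The two-body part of the excess energy `Fex`. -/
def pairExcess (v2 : ℝ → EReal) (G : BondGraph) : EReal := ∑ᶠ e ∈ G.E, (v2 (edgeLen e) + 1)

/-- The three-body part of the excess energy `Fex`. -/
def angleExcess (v3 : ℝ → ℝ) (G : BondGraph) : ℝ :=
  1 / 2 * ∑ᶠ t ∈ triples G, v3 (cwAngle (t.1 - t.2.1) (t.2.2 - t.2.1))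

lemma Fgraph_eq (v2 : ℝ → EReal) (v3 : ℝ → ℝ) (G : BondGraph) :
    Fgraph v2 v3 G = pairExcess v2 G + ((Fbond G + angleExcess v3 G : ℝ) : EReal) := by
  rw [EReal.coe_add, add_left_comm]
  rfl

variable {v2 : ℝ → EReal} {v3 : ℝ → ℝ} {G : BondGraph} {ε c : ℝ}

lemma pairExcess_nonneg (hv2 : ∀ r, 0 ≤ r → -1 ≤ v2 r) : 0 ≤ pairExcess v2 G :=
  finsum_nonneg fun _ => finsum_nonneg fun _ =>
    ereal_add_one_nonneg_iff.2 (hv2 _ (edgeLen_nonneg _))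

lemma pairExcess_eq_zero_iff (hv2 : ∀ r, 0 ≤ r → -1 ≤ v2 r) :
    pairExcess v2 G = 0 ↔ ∀ e ∈ G.E, v2 (edgeLen e) = -1 := by
  rw [pairExcess, finsum_mem_eq_finite_toFinset_sum _ G.finite_E,
    Finset.sum_eq_zero_iff_of_nonneg fun e _ =>
      ereal_add_one_nonneg_iff.2 (hv2 _ (edgeLen_nonneg e))]
  simp only [Set.Finite.mem_toFinset, ereal_add_one_eq_zero_iff]

lemma two_mul_angleExcess (v3 : ℝ → ℝ) (G : BondGraph) :
    2 * angleExcess v3 G =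
      ∑ t ∈ G.finite_triples.toFinset, v3 (cwAngle (t.1 - t.2.1) (t.2.2 - t.2.1)) := by
  rw [angleExcess, finsum_mem_eq_finite_toFinset_sum _ G.finite_triples]
  ring

lemma angleExcess_nonneg (hv3 : ∀ θ ∈ Set.Ico 0 (2 * π), 0 ≤ v3 θ) : 0 ≤ angleExcess v3 G :=
  mul_nonneg (by norm_num)
    (finsum_nonneg fun _ => finsum_nonneg fun _ => hv3 _ (cwAngle_mem_Ico _ _))

lemma angleExcess_eq_zero_iff (hv3 : ∀ θ ∈ Set.Ico 0 (2 * π), 0 ≤ v3 θ) :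
    angleExcess v3 G = 0 ↔ ∀ x y z, s(x, y) ∈ G.E → s(z, y) ∈ G.E → x ≠ z →
      v3 (cwAngle (x - y) (z - y)) = 0 := by
  rw [← mul_eq_zero_iff_left two_ne_zero, two_mul_angleExcess,
    Finset.sum_eq_zero_iff_of_nonneg fun t _ => hv3 _ (cwAngle_mem_Ico _ _)]
  simp only [Set.Finite.mem_toFinset, Prod.forall, triples, Set.mem_ofPred_eq, and_imp]

lemma mul_sum_turn_lt_two_mul_angleExcess (hv3 : ∀ θ ∈ Set.Ico 0 (2 * π), 0 ≤ v3 θ)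
    (hslope : ∀ θ ∈ Set.Icc (π - ε) (π + ε), θ ≠ π → c * |θ - π| < v3 θ)
    (hfin : (straightCorners ε G.E).Finite)
    (hpos : 0 < ∑ t ∈ hfin.toFinset, turn t.1 t.2.1 t.2.2) :
    c * ∑ t ∈ hfin.toFinset, turn t.1 t.2.1 t.2.2 < 2 * angleExcess v3 G := by
  have lt_of_pos : ∀ t ∈ hfin.toFinset, 0 < turn t.1 t.2.1 t.2.2 →
      c * turn t.1 t.2.1 t.2.2 < v3 (cwAngle (t.1 - t.2.1) (t.2.2 - t.2.1)) := by
    intro t ht hturn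
    obtain ⟨hxy, hzy, -, hle⟩ := hfin.mem_toFinset.1 ht
    rw [← BondGraph.abs_cwAngle_sub_pi_eq_turn hxy hzy] at hle hturn ⊢
    refine hslope _ ?_ (sub_ne_zero.1 (abs_pos.1 hturn))
    rwa [← Set.mem_Icc_iff_abs_le, abs_sub_comm]
  have le : ∀ t ∈ hfin.toFinset,
      c * turn t.1 t.2.1 t.2.2 ≤ v3 (cwAngle (t.1 - t.2.1) (t.2.2 - t.2.1)) := by
    intro t ht
    rcases (turn_nonneg t.1 t.2.1 t.2.2).eq_or_lt with h | h
    · rw [← h, mul_zero]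
      exact hv3 _ (cwAngle_mem_Ico _ _)
    · exact (lt_of_pos t ht h).le
  obtain ⟨t, ht, hturn⟩ : ∃ t ∈ hfin.toFinset, 0 < turn t.1 t.2.1 t.2.2 :=
    Finset.exists_lt_of_sum_lt (by simpa using hpos)
  calc
    c * ∑ t ∈ hfin.toFinset, turn t.1 t.2.1 t.2.2
        = ∑ t ∈ hfin.toFinset, c * turn t.1 t.2.1 t.2.2 := Finset.mul_sum _ _ _
    _ < ∑ t ∈ hfin.toFinset, v3 (cwAngle (t.1 - t.2.1) (t.2.2 - t.2.1)) :=
      Finset.sum_lt_sum le ⟨t, ht, lt_of_pos t ht hturn⟩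
    _ ≤ ∑ t ∈ G.finite_triples.toFinset, v3 (cwAngle (t.1 - t.2.1) (t.2.2 - t.2.1)) :=
      Finset.sum_le_sum_of_subset_of_nonneg
        (Set.Finite.toFinset_mono BondGraph.straightCorners_subset_triples)
        fun t _ _ => hv3 _ (cwAngle_mem_Ico _ _)
    _ = 2 * angleExcess v3 G := (two_mul_angleExcess v3 G).symm

/-- The factor `2` is the bond energy created by the deletion of a single edge. -/
lemma exists_finset_thetaEx_lt {δ : ℝ} (hδ : 0 < δ) (hv3 : ∀ θ ∈ Set.Ico 0 (2 * π), 0 ≤ v3 θ)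
    (hslope : ∀ θ ∈ Set.Icc (π - ε) (π + ε), θ ≠ π → 4 * δ⁻¹ * |θ - π| < v3 θ)
    (hG : AngleSeparated (2 * ε) G.E) :
    ∃ S : Finset (Sym2 Pt), (∀ γ, IsStraightPath ε (G.deleteEdges S) γ → thetaEx γ < δ) ∧
      2 * S.card ≤ angleExcess v3 G ∧ (2 * S.card = angleExcess v3 G → S = ∅) := by
  have hfin : (straightCorners ε G.E).Finite :=
    G.finite_triples.subset BondGraph.straightCorners_subset_triples
  obtain ⟨S, hS, hcard⟩ := hG.exists_finset_excess_lt hfin hδ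
  refine ⟨S, fun γ hγ => hγ.thetaEx_eq_excess.trans_lt (hS _ _ hγ.isStraightSeq), ?_⟩
  rcases S.eq_empty_or_nonempty with rfl | hne
  · exact ⟨by simpa using angleExcess_nonneg hv3, fun _ => rfl⟩
  · have hpos : 0 < S.card * δ := by
      have := hne.card_pos
      positivity
    have hlt : 2 * S.card < angleExcess v3 G := by
      have hturn : 4 * S.card ≤ 4 * δ⁻¹ * ∑ t ∈ hfin.toFinset, turn t.1 t.2.1 t.2.2 := calc
        (4 * S.card : ℝ) = 4 * δ⁻¹ * (S.card * δ) := by field_simp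
        _ ≤ _ := by gcongr
      linarith [mul_sum_turn_lt_two_mul_angleExcess hv3 hslope hfin (hpos.trans_le hcard)]
    exact ⟨hlt.le, fun h => absurd h hlt.ne⟩

end ExcessEnergy

section Potentials

variable {ε r0 θ r : ℝ} {v2 : ℝ → EReal} {v3 : ℝ → ℝ}

lemma V2Hyp.eq_one_of_eq_neg_one (hv2 : V2Hyp ε r0 v2) (hr : 0 ≤ r) (h : v2 r = -1) : r = 1 := by
  by_contra hne
  exact (hv2.gt_neg_one r hr hne).ne' h

lemma V3Hyp.mem_of_eq_zero (hv3 : V3Hyp ε v3) (hθ : θ ∈ Set.Ico 0 (2 * π)) (h : v3 θ = 0) :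
    θ ∈ ({π / 2, π, 3 * π / 2} : Set ℝ) := by
  by_contra hne
  exact (hv3.pos θ hθ.1 hθ.2.le hne).ne' h

lemma V3Hyp.nonneg (hv3 : V3Hyp ε v3) (hθ : θ ∈ Set.Ico 0 (2 * π)) : 0 ≤ v3 θ := by
  by_cases h : θ ∈ ({π / 2, π, 3 * π / 2} : Set ℝ)
  · rcases h with rfl | rfl | rfl
    exacts [hv3.zero_pi_half.ge, hv3.zero_pi.ge, hv3.zero_three_pi_half.ge]
  · exact (hv3.pos θ hθ.1 hθ.2.le h).le

lemma V3Hyp.slope_lt (hv3 : V3Hyp ε v3) (hθ : θ ∈ Set.Icc (π - ε) (π + ε)) (hne : θ ≠ π) :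
    4 * (π / 6 - ε)⁻¹ * |θ - π| < v3 θ :=
  (hv3.slope θ hθ).lt_of_ne fun h => hne (hv3.slope_eq θ hθ h.symm)

end Potentials

theorem stratification_general {ε δ : ℝ} (hδ : 0 < δ) {v2 : ℝ → EReal} {v3 : ℝ → ℝ}
    (hv2 : ∀ r, 0 ≤ r → -1 ≤ v2 r) (hv3 : ∀ θ ∈ Set.Ico 0 (2 * π), 0 ≤ v3 θ)
    (hslope : ∀ θ ∈ Set.Icc (π - ε) (π + ε), θ ≠ π → 4 * δ⁻¹ * |θ - π| < v3 θ)
    {G : BondGraph} (hG : AngleSeparated (2 * ε) G.E) :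
    ∃ Go : BondGraph, Go.V = G.V ∧ Go.E ⊆ G.E ∧
      (∀ γ : List Pt, IsStraightPath ε Go γ → thetaEx γ < δ) ∧
      ((Fbond Go : ℝ) : EReal) ≤ Fgraph v2 v3 G ∧
      (Fgraph v2 v3 G = ((Fbond Go : ℝ) : EReal) →
        G.E = Go.E ∧ (∀ e ∈ G.E, v2 (edgeLen e) = -1) ∧
          ∀ x y z : Pt, s(x, y) ∈ G.E → s(z, y) ∈ G.E → x ≠ z →
            v3 (cwAngle (x - y) (z - y)) = 0) := by
  obtain ⟨S, hS, card_le, card_eq⟩ := exists_finset_thetaEx_lt hδ hv3 hslope hG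
  have bond_le : (Fbond (G.deleteEdges S) : ℝ) ≤ Fbond G + 2 * S.card := by
    exact_mod_cast G.Fbond_deleteEdges_le S
  obtain ⟨hle, heq⟩ := ereal_coe_le_add_and_eq_of_add_eq (pairExcess_nonneg (G := G) hv2)
    (bond_le.trans (add_le_add_right card_le _))
  rw [← Fgraph_eq] at hle heq
  refine ⟨G.deleteEdges S, rfl, Set.sdiff_subset, hS, hle, fun h => ?_⟩
  obtain ⟨hpair, hbond⟩ := heq h
  obtain rfl : S = ∅ := card_eq (by linarith)
  have hangle : angleExcess v3 G = 0 := by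
    simp only [Finset.card_empty, Nat.cast_zero] at bond_le card_le
    linarith
  exact ⟨by simp [BondGraph.deleteEdges], (pairExcess_eq_zero_iff hv2).1 hpair,
    (angleExcess_eq_zero_iff hv3).1 hangle⟩

/-- **Lemma (construction of a graph with small angle excess / stratification).** -/
theorem stratification (ε : ℝ) (hε0 : 0 < ε) (hε : ε < π / 6)
    (r0 : ℝ) (hr0 : 1 < r0) (hr0' : r0 < Real.sqrt 2)
    (v2 : ℝ → EReal) (v3 : ℝ → ℝ) (hv2 : V2Hyp ε r0 v2) (hv3 : V3Hyp ε v3)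
    (G : BondGraph) (hreg : EpsRegular ε G) :
    ∃ Go : BondGraph, Go.V = G.V ∧ Go.E ⊆ G.E ∧
      (∀ γ : List Pt, IsStraightPath ε Go γ → thetaEx γ < π / 6 - ε) ∧
      ((Fbond Go : ℝ) : EReal) ≤ Fgraph v2 v3 G ∧
      (Fgraph v2 v3 G = ((Fbond Go : ℝ) : EReal) →
        G.E = Go.E ∧ (∀ e ∈ G.E, edgeLen e = 1) ∧
          ∀ x y z : Pt, s(x, y) ∈ G.E → s(z, y) ∈ G.E → x ≠ z →
            cwAngle (x - y) (z - y) ∈ ({π / 2, π, 3 * π / 2} : Set ℝ)) := by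
  obtain ⟨Go, hV, hE, hexcess, hle, heq⟩ := stratification_general (sub_pos.2 hε) hv2.ge_neg_one
    (fun _ => hv3.nonneg) (fun _ => hv3.slope_lt) (hreg.angleSeparated hε)
  refine ⟨Go, hV, hE, hexcess, hle, fun h => ?_⟩
  obtain ⟨hEq, hlen, hangle⟩ := heq h
  exact ⟨hEq, fun e he => hv2.eq_one_of_eq_neg_one (edgeLen_nonneg e) (hlen e he),
    fun x y z hxy hzy hxz => hv3.mem_of_eq_zero (cwAngle_mem_Ico _ _) (hangle x y z hxy hzy hxz)⟩

end
end
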